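/- arXiv:1406.0449 — 2 statements merged into one kernel-verified Lean document; each statement's English description precedes it below -/
import Mathlib

section
/- Let G be a finite connected simple graph with vertex set V and edge set E, and let G_1, …, G_k be connected subgraphs of G, with vertex sets V_j and edge sets E_j, such that the V_j are pairwise disjoint, |V_j| ≥ 2 for each j, and V = V_1 ∪ ⋯ ∪ V_k. Set 𝐄 = E_1 ∪ ⋯ ∪ E_k, and let v ∈ Δ_E be a vector with v_e = 0 for every e ∈ E ∖ 𝐄. Then: (1) v is an equilibrium for the WARM on G if and only if, for every j, the rescaled vector (|V|/|V_j|)·(v_e)_{e ∈ E_j} is an equilibrium for the WARM on G_j; and (2) v is a linearly stable equilibrium for the WARM on G if and only if, for every j, (|V|/|V_j|)·(v_e)_{e ∈ E_j} is a linearly stable equilibrium for the WARM on G_j. -/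
open Finset

noncomputable section

/-- Membership in the simplex `Δ`. -/
def InSimplex {ι : Type*} [Fintype ι] (v : ι → ℝ) : Prop :=
  (∀ i, 0 ≤ v i) ∧ ∑ i, v i = 1

/-- A WARM weight: a probability distribution on the subsets of the colour set,
giving no mass to the empty set. -/
def IsWarmWeight {ι : Type*} [Fintype ι] [DecidableEq ι] (p : Finset ι → ℝ) : Prop :=
  p ∅ = 0 ∧ (∀ A, 0 ≤ p A ∧ p A ≤ 1) ∧ ∑ A : Finset ι, p A = 1

/-- The WARM vector field `F`. -/
def warmF {ι : Type*} [Fintype ι] [DecidableEq ι] (α : ℝ) (p : Finset ι → ℝ)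
    (v : ι → ℝ) (i : ι) : ℝ :=
  -v i + ∑ A ∈ Finset.univ.filter (fun A : Finset ι => i ∈ A),
      p A * v i ^ α / (∑ j ∈ A, v j ^ α)

/-- The Jacobian matrix `D(v)`. -/
def warmD {ι : Type*} [Fintype ι] [DecidableEq ι] (α : ℝ) (p : Finset ι → ℝ)
    (v : ι → ℝ) : Matrix ι ι ℝ :=
  Matrix.of fun i k =>
    if i = k then
      -1 + α * v i ^ (α - 1) *
        ∑ A ∈ Finset.univ.filter (fun A : Finset ι => i ∈ A),
          p A * ((∑ j ∈ A, v j ^ α) - v i ^ α) / (∑ j ∈ A, v j ^ α) ^ 2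
    else
      -(α * v k ^ (α - 1) * v i ^ α *
        ∑ A ∈ Finset.univ.filter (fun A : Finset ι => i ∈ A ∧ k ∈ A),
          p A / (∑ j ∈ A, v j ^ α) ^ 2)

/-- `μ ∈ ℂ` is an eigenvalue of the real matrix `M`, i.e. a root of its
characteristic polynomial. -/
def IsEigenvalue {ι : Type*} [Fintype ι] [DecidableEq ι] (M : Matrix ι ι ℝ) (μ : ℂ) : Prop :=
  (M.charpoly.map (algebraMap ℝ ℂ)).IsRoot μ

/-- Linear stability: every complex eigenvalue has negative real part. -/
def LinStable {ι : Type*} [Fintype ι] [DecidableEq ι] (M : Matrix ι ι ℝ) : Prop :=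
  ∀ μ : ℂ, IsEigenvalue M μ → μ.re < 0

/-- Linear instability: some eigenvalue has positive real part. -/
def LinUnstable {ι : Type*} [Fintype ι] [DecidableEq ι] (M : Matrix ι ι ℝ) : Prop :=
  ∃ μ : ℂ, IsEigenvalue M μ ∧ 0 < μ.re

/-- Critical: neither linearly stable nor linearly unstable. -/
def CriticalPt {ι : Type*} [Fintype ι] [DecidableEq ι] (M : Matrix ι ι ℝ) : Prop :=
  ¬ LinStable M ∧ ¬ LinUnstable M


/-- The WARM weight of a graph `G` with designated vertex set `S`: each vertex `x ∈ S`
contributes mass `1/|S|` to the set of edges of `G` incident to `x`. -/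
def graphWarmP {W : Type*} [Fintype W] [DecidableEq W] (S : Finset W)
    (G : SimpleGraph W) [DecidableRel G.Adj] (A : Finset G.edgeSet) : ℝ :=
  ((S.filter (fun x =>
      A = Finset.univ.filter (fun e : G.edgeSet => x ∈ (e : Sym2 W)))).card : ℝ) /
    (S.card : ℝ)

def gstar {W : Type*} [Fintype W] [DecidableEq W] (G : SimpleGraph W) [DecidableRel G.Adj] (x : W) :
    Finset G.edgeSet := Finset.univ.filter (fun e : G.edgeSet => x ∈ (e : Sym2 W))

lemma mem_gstar {W : Type*} [Fintype W] [DecidableEq W] (G : SimpleGraph W) [DecidableRel G.Adj]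
    (x : W) (e : G.edgeSet) : e ∈ gstar G x ↔ x ∈ (e : Sym2 W) := by simp [gstar]

lemma graph_sum {W : Type*} [Fintype W] [DecidableEq W] (S : Finset W)
    (G : SimpleGraph W) [DecidableRel G.Adj] (P : Finset G.edgeSet → Prop) [DecidablePred P]
    (f : Finset G.edgeSet → ℝ) :
    ∑ A ∈ Finset.univ.filter P, graphWarmP S G A * f A =
      (∑ x ∈ S.filter (fun x => P (gstar G x)), f (gstar G x)) / (S.card : ℝ) := by
  have h : ∀ A : Finset G.edgeSet, graphWarmP S G A * f A =
      (∑ x ∈ S, if A = gstar G x then f A else 0) / (S.card : ℝ) := by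
    intro A
    rw [← Finset.sum_filter, Finset.sum_const, nsmul_eq_mul]
    unfold graphWarmP gstar
    ring
  simp_rw [h]
  rw [← Finset.sum_div, Finset.sum_comm]
  congr 1
  rw [Finset.sum_filter]
  apply Finset.sum_congr rfl
  intro x _
  rw [Finset.sum_filter]
  rw [Finset.sum_eq_single (gstar G x)]
  · simp
  · intro b _ hb
    simp [hb]
  · simp

def vsum {W : Type*} [Fintype W] [DecidableEq W] (G : SimpleGraph W) [DecidableRel G.Adj]
    (α : ℝ) (v : G.edgeSet → ℝ) (x : W) : ℝ := ∑ j ∈ gstar G x, v j ^ α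

lemma warmF_graph {W : Type*} [Fintype W] [DecidableEq W] (S : Finset W)
    (G : SimpleGraph W) [DecidableRel G.Adj] (α : ℝ) (v : G.edgeSet → ℝ) (i : G.edgeSet) :
    warmF α (graphWarmP S G) v i = -v i +
      (∑ x ∈ S.filter (fun x => x ∈ (i : Sym2 W)), v i ^ α / vsum G α v x) / (S.card : ℝ) := by
  unfold warmF
  simp_rw [mul_div_assoc]
  rw [graph_sum S G (fun A => i ∈ A) (fun A => v i ^ α / ∑ j ∈ A, v j ^ α)]
  simp_rw [mem_gstar]
  rfl

lemma warmD_graph_diag {W : Type*} [Fintype W] [DecidableEq W] (S : Finset W)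
    (G : SimpleGraph W) [DecidableRel G.Adj] (α : ℝ) (v : G.edgeSet → ℝ) (i : G.edgeSet) :
    warmD α (graphWarmP S G) v i i = -1 + α * v i ^ (α - 1) *
      ((∑ x ∈ S.filter (fun x => x ∈ (i : Sym2 W)),
        (vsum G α v x - v i ^ α) / vsum G α v x ^ 2) / (S.card : ℝ)) := by
  simp only [warmD, Matrix.of_apply, if_true]
  simp_rw [mul_div_assoc]
  rw [graph_sum S G (fun A => i ∈ A)
    (fun A => ((∑ j ∈ A, v j ^ α) - v i ^ α) / (∑ j ∈ A, v j ^ α) ^ 2)]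
  simp_rw [mem_gstar]
  rfl

lemma warmD_graph_off {W : Type*} [Fintype W] [DecidableEq W] (S : Finset W)
    (G : SimpleGraph W) [DecidableRel G.Adj] (α : ℝ) (v : G.edgeSet → ℝ) (i k : G.edgeSet)
    (hik : i ≠ k) :
    warmD α (graphWarmP S G) v i k = -(α * v k ^ (α - 1) * v i ^ α *
      ((∑ x ∈ S.filter (fun x => x ∈ (i : Sym2 W) ∧ x ∈ (k : Sym2 W)),
        (vsum G α v x ^ 2)⁻¹) / (S.card : ℝ))) := by
  simp only [warmD, Matrix.of_apply, if_neg hik]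
  simp_rw [div_eq_mul_inv (graphWarmP S G _)]
  rw [graph_sum S G (fun A => i ∈ A ∧ k ∈ A)
    (fun A => ((∑ j ∈ A, v j ^ α) ^ 2)⁻¹)]
  simp_rw [mem_gstar]
  rfl

/-- The edge inclusion. -/
def einc {V : Type*} {H G : SimpleGraph V} (h : H ≤ G) (e : H.edgeSet) : G.edgeSet :=
  ⟨(e : Sym2 V), SimpleGraph.edgeSet_mono h e.2⟩

lemma vsum_sub {V : Type*} [Fintype V] [DecidableEq V] (H G : SimpleGraph V)
    [DecidableRel H.Adj] [DecidableRel G.Adj] (h : H ≤ G) (α c : ℝ) (hα : α ≠ 0) (hc : 0 ≤ c)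
    (v : G.edgeSet → ℝ) (hv : ∀ e, 0 ≤ v e) (x : V)
    (hx : ∀ e : G.edgeSet, x ∈ (e : Sym2 V) → (e : Sym2 V) ∉ H.edgeSet → v e = 0) :
    vsum H α (fun e => c * v (einc h e)) x = c ^ α * vsum G α v x := by
  unfold vsum
  rw [Finset.mul_sum]
  apply Finset.sum_bij_ne_zero (fun e _ _ => einc h e)
  · intro e he _
    rw [mem_gstar] at he ⊢
    exact he
  · intro a _ _ b _ _ hab
    simpa [einc, Subtype.ext_iff] using hab
  · intro b hb hb0
    rw [mem_gstar] at hb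
    by_cases hbH : (b : Sym2 V) ∈ H.edgeSet
    · refine ⟨⟨b, hbH⟩, (mem_gstar _ _ _).2 hb, ?_, rfl⟩
      rw [Real.mul_rpow hc (hv _)]
      exact hb0
    · exact absurd (by rw [hx b hb hbH, Real.zero_rpow hα, mul_zero]) hb0
  · intro a _ _
    exact Real.mul_rpow hc (hv _)

lemma isEigenvalue_iff_det {ι : Type*} [Fintype ι] [DecidableEq ι] (M : Matrix ι ι ℝ) (μ : ℂ) :
    IsEigenvalue M μ ↔ (M.charpoly.map (algebraMap ℝ ℂ)).eval μ = 0 := Iff.rfl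

lemma linStable_block {ι κ : Type*} [Fintype ι] [DecidableEq ι] [LinearOrder κ]
    (M : Matrix ι ι ℝ) (b : ι → κ) (hb : ∀ i k, b i ≠ b k → M i k = 0) :
    LinStable M ↔ ∀ a, LinStable (M.toSquareBlock b a) := by
  have ht : M.BlockTriangular b := fun i k hik => hb i k hik.ne'
  have key : ∀ μ, IsEigenvalue M μ ↔ ∃ a, IsEigenvalue (M.toSquareBlock b a) μ := by
    intro μ
    rw [isEigenvalue_iff_det, ht.charpoly, Polynomial.map_prod, Polynomial.eval_prod,
      Finset.prod_eq_zero_iff]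
    constructor
    · rintro ⟨a, _, ha⟩
      exact ⟨a, ha⟩
    · rintro ⟨a, ha⟩
      refine ⟨a, ?_, ha⟩
      by_contra hn
      have : IsEmpty {i // b i = a} := ⟨fun i => hn (by
        rw [← i.2]; exact Finset.mem_image_of_mem _ (Finset.mem_univ _))⟩
      rw [isEigenvalue_iff_det, Matrix.charpoly, Matrix.det_isEmpty] at ha
      simp at ha
  constructor
  · intro h a μ hμ
    exact h μ ((key μ).2 ⟨a, hμ⟩)
  · intro h μ hμ
    obtain ⟨a, ha⟩ := (key μ).1 hμ
    exact h a μ ha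

lemma linStable_reindex {ι κ : Type*} [Fintype ι] [DecidableEq ι] [Fintype κ] [DecidableEq κ]
    (M : Matrix ι ι ℝ) (N : Matrix κ κ ℝ) (e : ι ≃ κ) (h : ∀ i k, M i k = N (e i) (e k)) :
    LinStable M ↔ LinStable N := by
  have : N = Matrix.reindex e e M := by
    ext i k
    simp [h]
  subst this
  unfold LinStable IsEigenvalue
  rw [Matrix.charpoly_reindex]

lemma linStable_neg_one {ι : Type*} [Fintype ι] [DecidableEq ι] :
    LinStable (-1 : Matrix ι ι ℝ) := by
  intro μ hμ
  have h1 : (-1 : Matrix ι ι ℝ) = Matrix.scalar ι (-1 : ℝ) := by rw [map_neg, map_one]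
  rw [isEigenvalue_iff_det, h1] at hμ
  have h2 : (Matrix.scalar ι (-1 : ℝ)).charpoly = (Polynomial.X + 1) ^ Fintype.card ι := by
    have := Matrix.charpoly_diagonal (fun _ : ι => (-1 : ℝ))
    simpa [Matrix.scalar_apply] using this
  rw [h2] at hμ
  simp at hμ
  have : μ = -1 := by linear_combination hμ.1
  simp [this]

/-- **Subgraph stability reduction.** Let `G` be a finite connected graph and let
`G₁,…,G_k` be connected subgraphs with pairwise disjoint vertex sets `V_j` of size at
least `2` covering `V`.  A vector `v` vanishing outside `𝐄 = E₁ ∪ ⋯ ∪ E_k` is an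
equilibrium (resp. a linearly stable equilibrium) of the WARM on `G` iff, for each `j`,
the rescaled restriction `(|V|/|V_j|)·(v_e)_{e ∈ E_j}` is an equilibrium (resp. a
linearly stable equilibrium) of the WARM on `G_j`. -/
theorem subgraph_stability_reduction
    {V : Type*} [Fintype V] [DecidableEq V]
    (G : SimpleGraph V) [DecidableRel G.Adj] (hG : G.Connected)
    (α : ℝ) (hα : 1 < α)
    (k : ℕ) (Gs : Fin k → SimpleGraph V) [∀ j, DecidableRel (Gs j).Adj]
    (Vs : Fin k → Finset V)
    (hle : ∀ j, Gs j ≤ G)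
    (hsupp : ∀ j, ∀ x y : V, (Gs j).Adj x y → x ∈ Vs j ∧ y ∈ Vs j)
    (hconn : ∀ j, ((Gs j).induce (↑(Vs j) : Set V)).Connected)
    (hcard : ∀ j, 2 ≤ (Vs j).card)
    (hdisj : ∀ j j', j ≠ j' → Disjoint (Vs j) (Vs j'))
    (hcover : ∀ x : V, ∃ j, x ∈ Vs j)
    (v : G.edgeSet → ℝ) (hv : InSimplex v)
    (hzero : ∀ e : G.edgeSet, (∀ j, (e : Sym2 V) ∉ (Gs j).edgeSet) → v e = 0) :
    ((∀ i, warmF α (graphWarmP Finset.univ G) v i = 0) ↔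
      ∀ j, ∀ i, warmF α (graphWarmP (Vs j) (Gs j))
        (fun e : (Gs j).edgeSet => (Fintype.card V : ℝ) / ((Vs j).card : ℝ) *
          v ⟨(e : Sym2 V), SimpleGraph.edgeSet_mono (hle j) e.2⟩) i = 0) ∧
    (((∀ i, warmF α (graphWarmP Finset.univ G) v i = 0) ∧
        LinStable (warmD α (graphWarmP Finset.univ G) v)) ↔
      ∀ j, ((∀ i, warmF α (graphWarmP (Vs j) (Gs j))
          (fun e : (Gs j).edgeSet => (Fintype.card V : ℝ) / ((Vs j).card : ℝ) *
            v ⟨(e : Sym2 V), SimpleGraph.edgeSet_mono (hle j) e.2⟩) i = 0) ∧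
        LinStable (warmD α (graphWarmP (Vs j) (Gs j))
          (fun e : (Gs j).edgeSet => (Fintype.card V : ℝ) / ((Vs j).card : ℝ) *
            v ⟨(e : Sym2 V), SimpleGraph.edgeSet_mono (hle j) e.2⟩)))) := by
  have hα0 : α ≠ 0 := by linarith
  have hα1 : α - 1 ≠ 0 := by linarith
  have hmem : ∀ j (e : Sym2 V), e ∈ (Gs j).edgeSet → ∀ x ∈ e, x ∈ Vs j := by
    intro j e
    induction e using Sym2.ind with
    | _ a b =>
      intro he x hx
      have := hsupp j a b he
      rcases Sym2.mem_iff.1 hx with rfl | rfl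
      exacts [this.1, this.2]
  have huniq : ∀ x j j', x ∈ Vs j → x ∈ Vs j' → j = j' := by
    intro x j j' h h'
    by_contra hn
    exact Finset.disjoint_left.1 (hdisj j j' hn) h h'
  have huniqe : ∀ (e : Sym2 V) j j', e ∈ (Gs j).edgeSet → e ∈ (Gs j').edgeSet → j = j' := by
    intro e j j' h h'
    induction e using Sym2.ind with
    | _ a b => exact huniq a j j' (hmem j _ h a (by simp)) (hmem j' _ h' a (by simp))
  have hloc : ∀ j, ∀ x ∈ Vs j, ∀ e : G.edgeSet, x ∈ (e : Sym2 V) →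
      (e : Sym2 V) ∉ (Gs j).edgeSet → v e = 0 := by
    intro j x hx e hxe hej
    apply hzero
    intro j' hej'
    have := huniq x j j' hx (hmem j' _ hej' x hxe)
    subst this
    exact hej hej'
  have hnj : ∀ j, (0 : ℝ) < ((Vs j).card : ℝ) := by
    intro j
    have := hcard j
    exact_mod_cast (by omega : 0 < (Vs j).card)
  have hn : ∀ j : Fin k, (0 : ℝ) < (Fintype.card V : ℝ) := by
    intro j
    have h1 := hcard j
    have h2 := Finset.card_le_univ (Vs j)
    exact_mod_cast (by omega : 0 < Fintype.card V)
  have hfilt : ∀ j (e : (Gs j).edgeSet), (Vs j).filter (fun x => x ∈ (e : Sym2 V)) =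
      Finset.univ.filter (fun x => x ∈ (e : Sym2 V)) := by
    intro j e
    ext x
    simp only [Finset.mem_filter, Finset.mem_univ, true_and, and_iff_right_iff_imp]
    exact hmem j _ e.2 x
  have hfilt2 : ∀ j (e f : (Gs j).edgeSet),
      (Vs j).filter (fun x => x ∈ (e : Sym2 V) ∧ x ∈ (f : Sym2 V)) =
      Finset.univ.filter (fun x => x ∈ (e : Sym2 V) ∧ x ∈ (f : Sym2 V)) := by
    intro j e f
    ext x
    simp only [Finset.mem_filter, Finset.mem_univ, true_and, and_iff_right_iff_imp]
    exact fun h => hmem j _ e.2 x h.1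
  have hvs : ∀ j, ∀ x ∈ Vs j, vsum (Gs j) α (fun e : (Gs j).edgeSet =>
      (Fintype.card V : ℝ) / ((Vs j).card : ℝ) *
        v ⟨(e : Sym2 V), SimpleGraph.edgeSet_mono (hle j) e.2⟩) x =
      ((Fintype.card V : ℝ) / ((Vs j).card : ℝ)) ^ α * vsum G α v x := fun j x hx =>
    vsum_sub (Gs j) G (hle j) α _ hα0 (div_pos (hn j) (hnj j)).le v hv.1 x (hloc j x hx)
  have hF : ∀ j (i : (Gs j).edgeSet), warmF α (graphWarmP (Vs j) (Gs j))
        (fun e : (Gs j).edgeSet => (Fintype.card V : ℝ) / ((Vs j).card : ℝ) *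
          v ⟨(e : Sym2 V), SimpleGraph.edgeSet_mono (hle j) e.2⟩) i =
      (Fintype.card V : ℝ) / ((Vs j).card : ℝ) *
        warmF α (graphWarmP Finset.univ G) v (einc (hle j) i) := by
    intro j i
    have hc := div_pos (hn j) (hnj j)
    have hr := (Real.rpow_pos_of_pos hc α).ne'
    have hsum : ∑ x ∈ (Vs j).filter (fun x => x ∈ (i : Sym2 V)),
        ((Fintype.card V : ℝ) / ((Vs j).card : ℝ) * v (einc (hle j) i)) ^ α /
          vsum (Gs j) α (fun e : (Gs j).edgeSet => (Fintype.card V : ℝ) / ((Vs j).card : ℝ) *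
          v ⟨(e : Sym2 V), SimpleGraph.edgeSet_mono (hle j) e.2⟩) x =
        ∑ x ∈ Finset.univ.filter (fun x => x ∈ (i : Sym2 V)),
          v (einc (hle j) i) ^ α / vsum G α v x := by
      rw [← hfilt j i]
      apply Finset.sum_congr rfl
      intro x hx
      rw [hvs j x (Finset.mem_filter.1 hx).1, Real.mul_rpow hc.le (hv.1 _),
        mul_div_mul_left _ _ hr]
    rw [warmF_graph, warmF_graph]
    erw [hsum]
    have h1 := (hn j).ne'
    have h2 := (hnj j).ne'
    simp only [einc, Finset.card_univ]
    field_simp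
    rfl
  have hF0 : ∀ i : G.edgeSet, v i = 0 → warmF α (graphWarmP Finset.univ G) v i = 0 := by
    intro i hi
    rw [warmF_graph, hi, Real.zero_rpow hα0]
    simp
  have part1 : (∀ i, warmF α (graphWarmP Finset.univ G) v i = 0) ↔
      ∀ j, ∀ i, warmF α (graphWarmP (Vs j) (Gs j))
        (fun e : (Gs j).edgeSet => (Fintype.card V : ℝ) / ((Vs j).card : ℝ) *
          v ⟨(e : Sym2 V), SimpleGraph.edgeSet_mono (hle j) e.2⟩) i = 0 := by
    constructor
    · intro h j i
      rw [hF, h, mul_zero]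
    · intro h i
      by_cases hi : ∃ j, (i : Sym2 V) ∈ (Gs j).edgeSet
      · obtain ⟨j, hj⟩ := hi
        have := h j ⟨i, hj⟩
        rw [hF] at this
        exact (mul_eq_zero.1 this).resolve_left (div_pos (hn j) (hnj j)).ne'
      · push Not at hi
        exact hF0 i (hzero i hi)
  have hD : ∀ j (i l : (Gs j).edgeSet), warmD α (graphWarmP (Vs j) (Gs j))
        (fun e : (Gs j).edgeSet => (Fintype.card V : ℝ) / ((Vs j).card : ℝ) *
          v ⟨(e : Sym2 V), SimpleGraph.edgeSet_mono (hle j) e.2⟩) i l =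
        warmD α (graphWarmP Finset.univ G) v (einc (hle j) i) (einc (hle j) l) := by
    intro j i l
    have hc := div_pos (hn j) (hnj j)
    have hr := (Real.rpow_pos_of_pos hc α).ne'
    have h1 := (hn j).ne'
    have h2 := (hnj j).ne'
    by_cases hil : i = l
    · subst hil
      have hsum : ∑ x ∈ (Vs j).filter (fun x => x ∈ (i : Sym2 V)),
          (vsum (Gs j) α (fun e : (Gs j).edgeSet => (Fintype.card V : ℝ) / ((Vs j).card : ℝ) *
            v ⟨(e : Sym2 V), SimpleGraph.edgeSet_mono (hle j) e.2⟩) x -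
            ((Fintype.card V : ℝ) / ((Vs j).card : ℝ) * v (einc (hle j) i)) ^ α) /
            vsum (Gs j) α (fun e : (Gs j).edgeSet => (Fintype.card V : ℝ) / ((Vs j).card : ℝ) *
            v ⟨(e : Sym2 V), SimpleGraph.edgeSet_mono (hle j) e.2⟩) x ^ 2 =
          (((Fintype.card V : ℝ) / ((Vs j).card : ℝ)) ^ α)⁻¹ *
          ∑ x ∈ Finset.univ.filter (fun x => x ∈ (i : Sym2 V)),
            (vsum G α v x - v (einc (hle j) i) ^ α) / vsum G α v x ^ 2 := by
        rw [← hfilt j i, Finset.mul_sum]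
        apply Finset.sum_congr rfl
        intro x hx
        rw [hvs j x (Finset.mem_filter.1 hx).1, Real.mul_rpow hc.le (hv.1 _), ← mul_sub, mul_pow,
          sq (_ ^ α), mul_assoc, mul_div_mul_left _ _ hr, div_mul_eq_div_div, div_eq_mul_inv,
          div_eq_mul_inv, div_eq_mul_inv]
        ring
      rw [warmD_graph_diag, warmD_graph_diag]
      erw [hsum]
      rw [Real.mul_rpow hc.le (hv.1 _), Real.rpow_sub_one hc.ne']
      simp only [einc, Finset.card_univ]
      generalize ((Fintype.card V : ℝ) / ((Vs j).card : ℝ)) ^ α = r at *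
      field_simp
      rfl
    · have hil' : einc (hle j) i ≠ einc (hle j) l := by
        intro h
        apply hil
        simpa [einc, Subtype.ext_iff] using h
      have hsum : ∑ x ∈ (Vs j).filter (fun x => x ∈ (i : Sym2 V) ∧ x ∈ (l : Sym2 V)),
          (vsum (Gs j) α (fun e : (Gs j).edgeSet => (Fintype.card V : ℝ) / ((Vs j).card : ℝ) *
            v ⟨(e : Sym2 V), SimpleGraph.edgeSet_mono (hle j) e.2⟩) x ^ 2)⁻¹ =
          ((((Fintype.card V : ℝ) / ((Vs j).card : ℝ)) ^ α) ^ 2)⁻¹ *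
          ∑ x ∈ Finset.univ.filter (fun x => x ∈ (i : Sym2 V) ∧ x ∈ (l : Sym2 V)),
            (vsum G α v x ^ 2)⁻¹ := by
        rw [← hfilt2 j i l, Finset.mul_sum]
        apply Finset.sum_congr rfl
        intro x hx
        rw [hvs j x (Finset.mem_filter.1 hx).1, mul_pow, mul_inv]
      rw [warmD_graph_off _ _ _ _ _ _ hil, warmD_graph_off _ _ _ _ _ _ hil']
      rw [hsum]
      rw [Real.mul_rpow hc.le (hv.1 _), Real.mul_rpow hc.le (hv.1 _), Real.rpow_sub_one hc.ne']
      simp only [einc, Finset.card_univ]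
      generalize ((Fintype.card V : ℝ) / ((Vs j).card : ℝ)) ^ α = r at *
      field_simp
      rfl
  -- colouring of edges by blocks
  let b : G.edgeSet → WithBot (Fin k) := fun e =>
    if h : ∃ j, (e : Sym2 V) ∈ (Gs j).edgeSet then (h.choose : WithBot (Fin k)) else ⊥
  have hb : ∀ (e : G.edgeSet) (j : Fin k), b e = (j : WithBot (Fin k)) ↔ (e : Sym2 V) ∈ (Gs j).edgeSet := by
    intro e j
    by_cases h : ∃ j, (e : Sym2 V) ∈ (Gs j).edgeSet
    · have : b e = (h.choose : WithBot (Fin k)) := dif_pos h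
      rw [this, WithBot.coe_inj]
      constructor
      · intro h'
        rw [← h']
        exact h.choose_spec
      · exact huniqe _ _ _ h.choose_spec
    · have : b e = ⊥ := dif_neg h
      rw [this]
      simp only [WithBot.bot_ne_coe, false_iff]
      exact fun hj => h ⟨j, hj⟩
  have hbot : ∀ e, b e = ⊥ → v e = 0 := by
    intro e he
    apply hzero
    intro j hj
    rw [(hb e j).2 hj] at he
    exact absurd he WithBot.coe_ne_bot
  have hD0 : ∀ i l, i ≠ l → (v i = 0 ∨ v l = 0) → warmD α (graphWarmP Finset.univ G) v i l = 0 := by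
    intro i l hil h
    rw [warmD_graph_off _ _ _ _ _ _ hil]
    rcases h with h | h
    · rw [h, Real.zero_rpow hα0]; ring
    · rw [h, Real.zero_rpow hα1]; ring
  have hblock : ∀ i l, b i ≠ b l → warmD α (graphWarmP Finset.univ G) v i l = 0 := by
    intro i l hil
    have hne : i ≠ l := fun h => hil (by rw [h])
    by_cases hi : b i = ⊥
    · exact hD0 i l hne (Or.inl (hbot i hi))
    by_cases hl : b l = ⊥
    · exact hD0 i l hne (Or.inr (hbot l hl))
    obtain ⟨j, hj⟩ := WithBot.ne_bot_iff_exists.1 hi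
    obtain ⟨j', hj'⟩ := WithBot.ne_bot_iff_exists.1 hl
    have e1 := (hb i j).1 hj.symm
    have e2 := (hb l j').1 hj'.symm
    rw [warmD_graph_off _ _ _ _ _ _ hne, Finset.filter_eq_empty_iff.2]
    · simp
    · rintro x - ⟨hx1, hx2⟩
      apply hil
      rw [← hj, ← hj', huniq x j j' (hmem j _ e1 x hx1) (hmem j' _ e2 x hx2)]
  have part2 : LinStable (warmD α (graphWarmP Finset.univ G) v) ↔
      ∀ j, LinStable (warmD α (graphWarmP (Vs j) (Gs j))
          (fun e : (Gs j).edgeSet => (Fintype.card V : ℝ) / ((Vs j).card : ℝ) *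
            v ⟨(e : Sym2 V), SimpleGraph.edgeSet_mono (hle j) e.2⟩)) := by
    rw [linStable_block _ b hblock]
    have hj : ∀ j : Fin k, LinStable ((warmD α (graphWarmP Finset.univ G) v).toSquareBlock b
        (j : WithBot (Fin k))) ↔ LinStable (warmD α (graphWarmP (Vs j) (Gs j))
          (fun e : (Gs j).edgeSet => (Fintype.card V : ℝ) / ((Vs j).card : ℝ) *
            v ⟨(e : Sym2 V), SimpleGraph.edgeSet_mono (hle j) e.2⟩)) := by
      intro j
      let eq : {i // b i = (j : WithBot (Fin k))} ≃ (Gs j).edgeSet :=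
        { toFun := fun i => ⟨(i.1 : Sym2 V), (hb i.1 j).1 i.2⟩
          invFun := fun e => ⟨einc (hle j) e, (hb _ j).2 e.2⟩
          left_inv := fun i => rfl
          right_inv := fun e => rfl }
      apply linStable_reindex _ _ eq
      intro i l
      rw [hD]
      rfl
    constructor
    · intro h j
      exact (hj j).1 (h _)
    · intro h a
      induction a using WithBot.recBotCoe with
      | bot =>
        have : (warmD α (graphWarmP Finset.univ G) v).toSquareBlock b ⊥ = -1 := by
          ext i l
          rw [Matrix.toSquareBlock_def, Matrix.of_apply, Matrix.neg_apply]
          by_cases hil : i = l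
          · subst hil
            rw [warmD_graph_diag, hbot _ i.2, Real.zero_rpow hα1, Matrix.one_apply_eq]
            ring
          · rw [Matrix.one_apply_ne hil, neg_zero]
            exact hD0 _ _ (fun h => hil (Subtype.ext h)) (Or.inl (hbot _ i.2))
        rw [this]
        exact linStable_neg_one
      | coe j => exact (hj j).2 (h j)
  refine ⟨part1, ?_⟩
  rw [part1, part2, forall_and]

end
end

section
/- For every integer n ≥ 1, every real α > 1, and every WARM weight p on [n], the set of linearly stable equilibria is finite; that is, the set {v ∈ Δ_n : F(v) = 0 and every complex eigenvalue of D(v) has negative real part} is a finite set. -/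
open Finset

noncomputable section

section Aux

open Filter Topology

abbrev SeqY := BoundedContinuousFunction ℕ ℝ

noncomputable def shB : SeqY →L[ℝ] SeqY :=
  LinearMap.mkContinuous
    { toFun := fun y => BoundedContinuousFunction.ofNormedAddCommGroupDiscrete
        (fun n => y (n+1)) ‖y‖ (fun n => y.norm_coe_le_norm _)
      map_add' := by intro y z; ext n; simp
      map_smul' := by intro y z; ext n; simp } 1
    (by
      intro y
      rw [one_mul]
      refine (BoundedContinuousFunction.norm_le (norm_nonneg _)).2 fun n => ?_
      exact y.norm_coe_le_norm _)

noncomputable def shS : SeqY →L[ℝ] SeqY :=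
  LinearMap.mkContinuous
    { toFun := fun y => BoundedContinuousFunction.ofNormedAddCommGroupDiscrete
        (fun n => if n = 0 then 0 else y (n-1)) ‖y‖ (fun n => by
          split_ifs
          · simp
          · exact y.norm_coe_le_norm _)
      map_add' := by intro y z; ext n; by_cases h : n = 0 <;> simp [h]
      map_smul' := by intro y z; ext n; by_cases h : n = 0 <;> simp [h] } 1
    (by
      intro y
      rw [one_mul]
      refine (BoundedContinuousFunction.norm_le (norm_nonneg _)).2 fun n => ?_
      by_cases h : n = 0
      · simp [h]
      · simpa [h] using y.norm_coe_le_norm _)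

noncomputable def sc0 : SeqY →L[ℝ] ℝ := BoundedContinuousFunction.evalCLM ℝ 0

noncomputable def se0 : SeqY := BoundedContinuousFunction.ofNormedAddCommGroupDiscrete
  (fun n => if n = 0 then 1 else 0) 1 (fun n => by split_ifs <;> simp)

@[simp] lemma shB_apply (y : SeqY) (n : ℕ) : shB y n = y (n+1) := rfl
@[simp] lemma shS_apply (y : SeqY) (n : ℕ) : shS y n = if n = 0 then 0 else y (n-1) := rfl
@[simp] lemma sc0_apply (y : SeqY) : sc0 y = y 0 := rfl
@[simp] lemma se0_apply (n : ℕ) : se0 n = if n = 0 then 1 else 0 := rfl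

lemma shB_shS (y : SeqY) : shB (shS y) = y := by ext n; simp
lemma shS_shB (y : SeqY) : shS (shB y) = y - sc0 y • se0 := by
  ext n; rcases n with _ | n <;> simp
lemma shB_se0 : shB se0 = 0 := by ext n; simp
lemma sc0_shS (y : SeqY) : sc0 (shS y) = 0 := by simp
lemma sc0_se0 : sc0 se0 = 1 := by simp


/-- A Banach space of power series in one variable, with shift operators. -/
structure ShiftData (Y : Type) [NormedAddCommGroup Y] [NormedSpace ℝ Y] where
  S : Y →L[ℝ] Y
  B : Y →L[ℝ] Y
  c : Y →L[ℝ] ℝ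
  e : Y
  BS : ∀ y, B (S y) = y
  SB : ∀ y, S (B y) = y - c y • e
  Be : B e = 0
  cS : ∀ y, c (S y) = 0
  ce : c e = 1
  sep : ∀ y, (∀ n : ℕ, c ((B ^ n) y) = 0) → y = 0

section SD
variable {Y : Type} [NormedAddCommGroup Y] [NormedSpace ℝ Y] [CompleteSpace Y] (D : ShiftData Y)

noncomputable def resB (t : ℝ) : Y →L[ℝ] Y := Ring.inverse (1 - t • D.B)
noncomputable def evY (t : ℝ) : Y →L[ℝ] ℝ := D.c.comp (resB D t)

lemma analytic_one_sub (t₀ : ℝ) :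
    AnalyticAt ℝ (fun t : ℝ => (1 - t • D.B : Y →L[ℝ] Y)) t₀ :=
  AnalyticAt.sub analyticAt_const (AnalyticAt.smul analyticAt_id analyticAt_const)

lemma analyticAt_resB : AnalyticAt ℝ (resB D) 0 := by
  have h2 := analyticAt_inverse (𝕜 := ℝ) (A := Y →L[ℝ] Y) (1 : (Y →L[ℝ] Y)ˣ)
  refine AnalyticAt.fun_comp (g := Ring.inverse) (f := fun t : ℝ => (1 - t • D.B : Y →L[ℝ] Y)) ?_ (analytic_one_sub D 0)
  rw [zero_smul, sub_zero]
  exact h2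

lemma eventually_unit (D : ShiftData Y) : ∀ᶠ t : ℝ in 𝓝 0, IsUnit (1 - t • D.B : Y →L[ℝ] Y) := by
  have h : ContinuousAt (fun t : ℝ => (1 - t • D.B : Y →L[ℝ] Y)) 0 :=
    (analytic_one_sub D 0).continuousAt
  refine h.eventually ?_
  beta_reduce
  rw [zero_smul, sub_zero]
  exact Units.nhds (R := Y →L[ℝ] Y) 1

lemma evY_e {t : ℝ} (h : IsUnit (1 - t • D.B : Y →L[ℝ] Y)) : evY D t D.e = 1 := by
  have h1 : resB D t * (1 - t • D.B) = 1 := Ring.inverse_mul_cancel _ h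
  have h2 := congrArg (fun L => L D.e) h1
  simp [D.Be] at h2
  simp [evY, h2, D.ce]

lemma evY_S {t : ℝ} (h : IsUnit (1 - t • D.B : Y →L[ℝ] Y)) (y : Y) :
    evY D t (D.S y) = t * evY D t y := by
  have h1 : resB D t * (1 - t • D.B) = 1 := Ring.inverse_mul_cancel _ h
  have h1' : (1 - t • D.B) * resB D t = 1 := Ring.mul_inverse_cancel _ h
  set w := resB D t y with hw
  have hy : y = w - t • D.B w := by
    have := congrArg (fun L => L y) h1'
    simpa using this.symm
  have h2 : D.S y = (1 - t • D.B) (D.S w) + (t * D.c w) • D.e := by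
    rw [hy]
    simp only [map_sub, map_smul, D.SB, sub_apply,
      smul_apply, one_apply_eq_self, D.BS]
    module
  have h3 : ∀ z, resB D t ((1 - t • D.B) z) = z := fun z => by
    have := congrArg (fun L => L z) h1
    simpa using this
  have h4 := evY_e D h
  simp only [evY, ContinuousLinearMap.comp_apply] at *
  rw [h2, map_add, h3, map_smul, map_add, map_smul, h4, D.cS, ← hw]
  simp

lemma evY_zero (y : Y) : evY D 0 y = D.c y := by
  have : resB D 0 = 1 := by
    unfold resB
    rw [zero_smul, sub_zero]
    exact Ring.inverse_one _
  simp [evY, this]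

lemma continuousAt_evY (y : Y) : ContinuousAt (fun t => evY D t y) 0 := by
  have := (analyticAt_resB D).continuousAt
  unfold evY
  simp only [ContinuousLinearMap.comp_apply]
  fun_prop

lemma sep_aux (y : Y) (h : ∀ᶠ t in 𝓝 (0:ℝ), evY D t y = 0) :
    D.c y = 0 ∧ ∀ᶠ t in 𝓝 (0:ℝ), evY D t (D.B y) = 0 := by
  have h0 : D.c y = 0 := by rw [← evY_zero D]; exact h.self_of_nhds
  refine ⟨h0, ?_⟩
  have hne : ∀ᶠ t in 𝓝[≠] (0:ℝ), evY D t (D.B y) = 0 := by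
    filter_upwards [h.filter_mono nhdsWithin_le_nhds,
      (eventually_unit D).filter_mono nhdsWithin_le_nhds, self_mem_nhdsWithin] with t h1 h2 h3
    have := evY_S D h2 (D.B y)
    rw [D.SB] at this
    simp only [h0, zero_smul, sub_zero, h1] at this
    have h3 : t ≠ 0 := h3
    simpa [h3] using this.symm
  have h00 : evY D 0 (D.B y) = 0 := by
    have h1 : Tendsto (fun t => evY D t (D.B y)) (𝓝[≠] 0) (𝓝 (evY D 0 (D.B y))) :=
      (continuousAt_evY D (D.B y)).tendsto.mono_left nhdsWithin_le_nhds
    have h2 : Tendsto (fun t => evY D t (D.B y)) (𝓝[≠] 0) (𝓝 0) :=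
      tendsto_const_nhds.congr' (by filter_upwards [hne] with t ht using ht.symm)
    exact tendsto_nhds_unique h1 h2
  rw [eventually_nhdsWithin_iff] at hne
  filter_upwards [hne] with t ht
  by_cases h : t = 0
  · rw [h, h00]
  · exact ht h

lemma evY_sep (y : Y) (h : ∀ᶠ t in 𝓝 (0:ℝ), evY D t y = 0) : y = 0 := by
  refine D.sep y fun n => ?_
  induction n generalizing y with
  | zero => exact (sep_aux D y h).1
  | succ n ih =>
    rw [pow_succ]
    exact ih (D.B y) (sep_aux D y h).2

lemma taylor_split (d : ℕ) (y : Y) :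
    y = (D.S ^ d) ((D.B ^ d) y) + ∑ i ∈ Finset.range d, D.c ((D.B ^ i) y) • (D.S ^ i) D.e := by
  induction d with
  | zero => simp
  | succ d ih =>
    rw [Finset.sum_range_succ, pow_succ D.S, pow_succ' D.B]
    simp only [mul_apply_eq_comp]
    rw [D.SB, map_sub, map_smul]
    nth_rewrite 1 [ih]
    abel

end SD

noncomputable def seqShift : ShiftData SeqY where
  S := shS
  B := shB
  c := sc0
  e := se0
  BS := shB_shS
  SB := shS_shB
  Be := shB_se0
  cS := sc0_shS
  ce := sc0_se0
  sep := by
    intro y h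
    ext n
    have : ∀ n k (y : SeqY), (shB ^ n) y k = y (k + n) := by
      intro n
      induction n with
      | zero => intro k y; simp
      | succ n ih =>
        intro k y
        rw [pow_succ]
        change (shB ^ n) (shB y) k = _
        rw [ih]; simp [add_assoc]
    have h2 := h n
    rw [sc0_apply, this] at h2
    simpa using h2

/-- base change -/
theorem base_change {ι : Type} [Fintype ι] (f : (ι → ℝ) → ℝ) (hf : AnalyticAt ℝ f 0)
    (L : Type) [NormedRing L] [NormedAlgebra ℝ L] [NormOneClass L] [CompleteSpace L] :
    ∃ G : (ι → L) → L, ∃ δ > 0, AnalyticOnNhd ℝ G (Metric.ball 0 δ) ∧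
      ∀ a ∈ Metric.ball (0 : ι → L) δ, ∀ l ∈ Metric.ball (0 : ι → ℝ) δ,
      ∀ (W : Type) [NormedAddCommGroup W] [NormedSpace ℝ W] (φ : L →L[ℝ] W),
        (∀ i b, φ (a i * b) = l i • φ b) → φ (G a) = f l • φ 1 := by
  classical
  obtain ⟨p, r, hp⟩ := hf
  let q : FormalMultilinearSeries ℝ (ι → L) L := fun n =>
    ∑ j : Fin n → ι, (p n (fun i => Pi.single (j i) 1)) •
      (ContinuousMultilinearMap.mkPiAlgebraFin ℝ n L).compContinuousLinearMap
        (fun i => ContinuousLinearMap.proj (R := ℝ) (φ := fun _ : ι => L) (j i))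
  have hqa : ∀ n (a : ι → L), q n (fun _ => a) =
      ∑ j : Fin n → ι, (p n (fun i => Pi.single (j i) 1)) • (List.ofFn fun i => a (j i)).prod := by
    intro n a
    simp [q]
  obtain ⟨r0, hr0, hr0r⟩ := ENNReal.lt_iff_exists_nnreal_btwn.1 hp.r_pos
  have hr0' : 0 < r0 := by exact_mod_cast hr0
  obtain ⟨C, hC, hpC⟩ := p.norm_mul_pow_le_of_lt_radius (lt_of_lt_of_le hr0r hp.r_le)
  let k : NNReal := Fintype.card ι + 1
  have hk : 0 < k := by positivity
  have hqm : ∀ n (m : Fin n → ι → L), q n m =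
      ∑ j : Fin n → ι, (p n (fun i => Pi.single (j i) 1)) •
        (List.ofFn fun i => m i (j i)).prod := by
    intro n m
    simp [q]
  have hqn : ∀ n, ‖q n‖ ≤ k ^ n * ‖p n‖ := by
    intro n
    refine ContinuousMultilinearMap.opNorm_le_bound (by positivity) fun m => ?_
    rw [hqm]
    refine (norm_sum_le _ _).trans ?_
    refine (Finset.sum_le_card_nsmul _ _ (‖p n‖ * ∏ i, ‖m i‖) ?_).trans ?_
    · intro j _
      rw [norm_smul]
      have h1 : ‖p n (fun i => Pi.single (j i) 1)‖ ≤ ‖p n‖ := by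
        refine ((p n).le_opNorm _).trans ?_
        have : ∏ i, ‖(Pi.single (j i) 1 : ι → ℝ)‖ ≤ 1 := by
          refine Finset.prod_le_one (fun _ _ => norm_nonneg _) (fun i _ => ?_)
          rw [Pi.norm_single]; simp
        nlinarith [norm_nonneg (p n)]
      have h2 : ‖(List.ofFn fun i => m i (j i)).prod‖ ≤ ∏ i, ‖m i‖ := by
        have := (ContinuousMultilinearMap.mkPiAlgebraFin ℝ n L).le_opNorm (fun i => m i (j i))
        rw [ContinuousMultilinearMap.norm_mkPiAlgebraFin, one_mul,
          ContinuousMultilinearMap.mkPiAlgebraFin_apply] at this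
        exact this.trans
          (Finset.prod_le_prod (fun _ _ => norm_nonneg _) (fun i _ => norm_le_pi_norm _ _))
      gcongr
    · rw [nsmul_eq_mul, ← mul_assoc]
      gcongr
      simp only [Finset.card_univ, Fintype.card_fun, Fintype.card_fin, Nat.cast_pow]
      gcongr
      simp [k]
  have hrad : ((r0 / k : NNReal) : ENNReal) ≤ q.radius := by
    refine q.le_radius_of_bound C fun n => ?_
    refine le_trans ?_ (hpC n)
    have : (((r0 / k : NNReal) : ℝ)) ^ n = (r0:ℝ) ^ n / (k:ℝ) ^ n := by
      push_cast; rw [div_pow]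
    rw [this]
    have hk' : (0:ℝ) < (k:ℝ) ^ n := by positivity
    calc ‖q n‖ * ((r0:ℝ) ^ n / (k:ℝ) ^ n) ≤ (k ^ n * ‖p n‖) * ((r0:ℝ) ^ n / (k:ℝ) ^ n) := by
          gcongr; exact hqn n
      _ = _ := by field_simp
  set δ : NNReal := r0 / k with hδ
  have hδ0 : 0 < δ := by positivity
  have hδr : δ ≤ r0 := by
    rw [hδ]; refine div_le_self (bot_le) ?_; simp [k]
  have hqs : HasFPowerSeriesOnBall q.sum q 0 q.radius :=
    q.hasFPowerSeriesOnBall (lt_of_lt_of_le (by exact_mod_cast hδ0) hrad)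
  refine ⟨q.sum, δ, by exact_mod_cast hδ0, ?_, ?_⟩
  · intro a ha
    refine hqs.analyticAt_of_mem ?_
    refine lt_of_lt_of_le ?_ hrad
    rw [edist_dist]
    rw [Metric.mem_ball] at ha
    rw [← ENNReal.ofReal_coe_nnreal]
    exact (ENNReal.ofReal_lt_ofReal_iff (by exact_mod_cast hδ0)).2 ha
  · intro a ha l hl W _ _ φ hφ
    have ha' : a ∈ Metric.eball (0 : ι → L) q.radius := by
      refine lt_of_lt_of_le ?_ hrad
      rw [edist_dist]
      rw [Metric.mem_ball] at ha
      rw [← ENNReal.ofReal_coe_nnreal]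
      exact (ENNReal.ofReal_lt_ofReal_iff (by exact_mod_cast hδ0)).2 ha
    have hl' : l ∈ Metric.eball (0 : ι → ℝ) r := by
      refine lt_trans ?_ hr0r
      rw [edist_dist]
      rw [Metric.mem_ball] at hl
      rw [← ENNReal.ofReal_coe_nnreal]
      refine (ENNReal.ofReal_lt_ofReal_iff (by exact_mod_cast hr0')).2 (hl.trans_le ?_)
      exact_mod_cast hδr
    have s1 := (hqs.hasSum ha').mapL φ
    have s2 := (hp.hasSum hl').smul_const (φ 1)
    rw [zero_add] at s1 s2
    refine s1.unique ?_
    convert s2 using 2 with n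
    rw [hqa, map_sum]
    have hprod : ∀ (n : ℕ) (j : Fin n → ι),
        φ (List.ofFn fun i => a (j i)).prod = (∏ i, l (j i)) • φ 1 := by
      intro n
      induction n with
      | zero => intro j; simp
      | succ n ih =>
        intro j
        rw [List.ofFn_succ, List.prod_cons, hφ, ih (fun i => j i.succ), Fin.prod_univ_succ, mul_smul]
    simp only [map_smul, hprod, smul_smul]
    rw [← Finset.sum_smul]
    congr 1
    have hl2 : l = ∑ i, l i • (Pi.single i 1 : ι → ℝ) := by
      ext i; simp [Finset.sum_apply, Pi.single_apply]
    conv_rhs => rw [show (fun _ : Fin n => l) = fun _ => ∑ i, l i • (Pi.single i 1 : ι → ℝ) from by rw [← hl2]]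
    rw [ContinuousMultilinearMap.map_sum]
    refine Finset.sum_congr rfl fun j _ => ?_
    rw [ContinuousMultilinearMap.map_smul_univ, smul_eq_mul, mul_comm]

section WD
variable {Y : Type} [NormedAddCommGroup Y] [NormedSpace ℝ Y] [CompleteSpace Y]
variable {V : Type} [NormedAddCommGroup V] [NormedSpace ℝ V] [FiniteDimensional ℝ V]

lemma ShiftData.nontrivial (D : ShiftData Y) : Nontrivial Y :=
  ⟨⟨D.e, 0, fun h => by have := D.ce; rw [h] at this; simp at this⟩⟩

lemma an_apply {X E F : Type} [NormedAddCommGroup X] [NormedSpace ℝ X]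
    [NormedAddCommGroup E] [NormedSpace ℝ E] [NormedAddCommGroup F] [NormedSpace ℝ F]
    {f : X → (E →L[ℝ] F)} {g : X → E} {x : X} (hf : AnalyticAt ℝ f x) (hg : AnalyticAt ℝ g x) :
    AnalyticAt ℝ (fun x => f x (g x)) x :=
  AnalyticAt.fun_comp (g := fun p : (E →L[ℝ] F) × E => p.1 p.2) (f := fun x => (f x, g x))
    (ContinuousLinearMap.analyticAt_bilinear (ContinuousLinearMap.id ℝ (E →L[ℝ] F)) _) (hf.prod hg)

lemma isUnit_smul' {c : ℝ} (hc : c ≠ 0) {M : Y →L[ℝ] Y} (hM : IsUnit M) : IsUnit (c • M) := by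
  rw [Algebra.smul_def]
  exact ((IsUnit.mk0 c hc).map (algebraMap ℝ (Y →L[ℝ] Y))).mul hM

lemma eventually_isUnit' {M : Y →L[ℝ] Y} (hM : IsUnit M) : ∀ᶠ A in 𝓝 M, IsUnit A := by
  have := Units.nhds (R := Y →L[ℝ] Y) hM.unit
  rw [hM.unit_spec] at this
  exact this

lemma mulOp (D : ShiftData Y) (f : V × ℝ → ℝ) (hf : AnalyticAt ℝ f 0) :
    ∃ ρ0 > 0, ∀ ρ : ℝ, 0 < ρ → ρ < ρ0 → ∃ M : V → (Y →L[ℝ] Y), AnalyticAt ℝ M 0 ∧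
      ∀ᶠ z : V × ℝ in 𝓝 0, ∀ y, evY D z.2 (M z.1 y) = f (z.1, ρ * z.2) * evY D z.2 y := by
  have := D.nontrivial
  let b := Module.finBasis ℝ V
  let T : (Fin (Module.finrank ℝ V) ⊕ Unit → ℝ) → V × ℝ := fun l => (∑ j, l (Sum.inl j) • b j, l (Sum.inr ()))
  have hT : AnalyticAt ℝ T 0 := by
    refine AnalyticAt.prod ?_ ?_
    · refine Finset.analyticAt_fun_sum _ fun j _ => ?_
      exact AnalyticAt.smul (ContinuousLinearMap.analyticAt
        (ContinuousLinearMap.proj (R := ℝ) (φ := fun _ : Fin (Module.finrank ℝ V) ⊕ Unit => ℝ) (Sum.inl j)) _) analyticAt_const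
    · exact (ContinuousLinearMap.analyticAt
        (ContinuousLinearMap.proj (R := ℝ) (φ := fun _ : Fin (Module.finrank ℝ V) ⊕ Unit => ℝ) (Sum.inr ())) _)
  have hT0 : T 0 = 0 := by simp [T]
  have hfT : AnalyticAt ℝ (fun l => f (T l)) 0 := AnalyticAt.fun_comp (by rw [hT0]; exact hf) hT
  obtain ⟨G, δ, hδ, hG, hφ⟩ := base_change _ hfT (Y →L[ℝ] Y)
  refine ⟨δ / (‖D.S‖ + 1), by positivity, fun ρ hρ hρδ => ?_⟩
  let a : V → (Fin (Module.finrank ℝ V) ⊕ Unit → (Y →L[ℝ] Y)) := fun x =>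
    Sum.elim (fun j => (LinearMap.toContinuousLinearMap (b.coord j) x) • 1) (fun _ => ρ • D.S)
  let l : V × ℝ → (Fin (Module.finrank ℝ V) ⊕ Unit → ℝ) := fun z =>
    Sum.elim (fun j => (LinearMap.toContinuousLinearMap (b.coord j) z.1)) (fun _ => ρ * z.2)
  have ha : AnalyticAt ℝ a 0 := by
    refine AnalyticAt.pi fun j => ?_
    rcases j with j | j
    · exact AnalyticAt.smul (ContinuousLinearMap.analyticAt (LinearMap.toContinuousLinearMap (b.coord j)) _) analyticAt_const
    · exact analyticAt_const
  have hl : ContinuousAt l 0 := by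
    refine continuousAt_pi.2 fun j => ?_
    rcases j with j | j
    · exact Continuous.continuousAt (by simp only [l, Sum.elim_inl]; fun_prop)
    · exact Continuous.continuousAt (by simp only [l, Sum.elim_inr]; fun_prop)
  have ha0 : a 0 ∈ Metric.ball 0 δ := by
    rw [mem_ball_zero_iff, pi_norm_lt_iff hδ]
    rintro (j | j)
    · simpa [a] using hδ
    · simp only [a, Sum.elim_inr, norm_smul, Real.norm_eq_abs, abs_of_pos hρ]
      rw [lt_div_iff₀ (by positivity)] at hρδ
      nlinarith [norm_nonneg D.S]
  have hl0 : l 0 ∈ Metric.ball 0 δ := by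
    rw [mem_ball_zero_iff, pi_norm_lt_iff hδ]
    rintro (j | j) <;> simpa [l] using hδ
  refine ⟨fun x => G (a x), AnalyticAt.fun_comp (hG _ ha0) ha, ?_⟩
  have e1 : ∀ᶠ z : V × ℝ in 𝓝 0, a z.1 ∈ Metric.ball 0 δ := by
    have : ContinuousAt (fun z : V × ℝ => a z.1) 0 :=
      ContinuousAt.comp (f := Prod.fst) (g := a) ha.continuousAt continuous_fst.continuousAt
    exact this.eventually (Metric.isOpen_ball.mem_nhds ha0)
  have e2 : ∀ᶠ z : V × ℝ in 𝓝 0, l z ∈ Metric.ball 0 δ :=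
    hl.eventually (Metric.isOpen_ball.mem_nhds hl0)
  have e3 : ∀ᶠ z : V × ℝ in 𝓝 0, IsUnit (1 - z.2 • D.B : Y →L[ℝ] Y) :=
    (continuous_snd.continuousAt (x := (0 : V × ℝ))).eventually (eventually_unit D)
  filter_upwards [e1, e2, e3] with z h1 h2 h3 y
  have := hφ (a z.1) h1 (l z) h2 _ (ContinuousLinearMap.compL ℝ Y Y ℝ (evY D z.2)) (by
    intro i B
    ext y
    rcases i with j | j
    · simp [a, l]
    · simp [a, l, evY_S D h3]; ring)
  have h4 := congrArg (fun A => A y) this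
  have h5 : T (l z) = (z.1, ρ * z.2) := by
    ext
    · simp only [T, l, Sum.elim_inl]
      exact b.sum_repr z.1
    · simp [T, l]
  simp only [h5] at h4
  simpa using h4

lemma mulOpUnit (D : ShiftData Y) (u : ℝ → ℝ) (hu : AnalyticAt ℝ u 0) (hu0 : u 0 ≠ 0) :
    ∃ ρ0 > 0, ∀ ρ : ℝ, 0 < ρ → ρ < ρ0 → ∃ M : (Y →L[ℝ] Y), IsUnit M ∧
      ∀ᶠ t : ℝ in 𝓝 0, ∀ y, evY D t (M y) = u (ρ * t) * evY D t y := by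
  have := D.nontrivial
  have hfT : AnalyticAt ℝ (fun l : Unit → ℝ => u (l ())) 0 := AnalyticAt.fun_comp (by exact hu)
    (ContinuousLinearMap.analyticAt (ContinuousLinearMap.proj (R := ℝ) (φ := fun _ : Unit => ℝ) ()) _)
  obtain ⟨G, δ, hδ, hG, hφ⟩ := base_change _ hfT (Y →L[ℝ] Y)
  have hG0 : G 0 = u 0 • 1 := by
    have := hφ 0 (by simpa using hδ) 0 (by simpa using hδ) _ (ContinuousLinearMap.id ℝ (Y →L[ℝ] Y))
      (by intro i b; simp)
    simpa using this
  have hunit : ∀ᶠ a in 𝓝 (0 : Unit → (Y →L[ℝ] Y)), IsUnit (G a) := by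
    refine (hG 0 (by simpa using hδ)).continuousAt.eventually ?_
    have : IsUnit (G 0) := by
      rw [hG0]
      exact isUnit_smul' hu0 isUnit_one
    exact eventually_isUnit' this
  have hS : ContinuousAt (fun ρ : ℝ => (fun _ : Unit => ρ • D.S)) 0 :=
    Continuous.continuousAt (by fun_prop)
  have e1 : ∀ᶠ ρ : ℝ in 𝓝 0, (IsUnit (G (fun _ => ρ • D.S)) ∧ (fun _ : Unit => ρ • D.S) ∈ Metric.ball 0 δ) := by
    refine hS.eventually (p := fun a => IsUnit (G a) ∧ a ∈ Metric.ball 0 δ) ?_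
    have : (fun _ : Unit => (0:ℝ) • D.S) = 0 := by ext; simp
    beta_reduce
    rw [this]
    exact hunit.and (Metric.ball_mem_nhds _ hδ)
  obtain ⟨ρ0, hρ0, h⟩ := Metric.eventually_nhds_iff.1 e1
  refine ⟨ρ0, hρ0, fun ρ hρ hρ0' => ?_⟩
  obtain ⟨h1, h2⟩ := h (y := ρ) (by simpa [abs_of_pos hρ] using hρ0')
  refine ⟨_, h1, ?_⟩
  have e2 : ∀ᶠ t : ℝ in 𝓝 0, (fun _ : Unit => ρ * t) ∈ Metric.ball 0 δ := by
    have : ContinuousAt (fun t : ℝ => (fun _ : Unit => ρ * t)) 0 := Continuous.continuousAt (by fun_prop)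
    refine this.eventually ?_
    have : (fun _ : Unit => ρ * 0) = 0 := by ext; simp
    beta_reduce
    rw [this]
    exact (Metric.ball_mem_nhds _ hδ)
  filter_upwards [e2, eventually_unit D] with t ht h3 y
  have := hφ _ h2 _ ht _ (ContinuousLinearMap.compL ℝ Y Y ℝ (evY D t)) (by
    intro i B
    ext y
    simp [evY_S D h3]; ring)
  have h4 := congrArg (fun A => A y) this
  simpa using h4

lemma evY_S_pow (D : ShiftData Y) {t : ℝ} (h : IsUnit (1 - t • D.B : Y →L[ℝ] Y)) (d : ℕ) (y : Y) :
    evY D t ((D.S ^ d) y) = t ^ d * evY D t y := by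
  induction d with
  | zero => simp
  | succ d ih =>
    rw [pow_succ']
    change evY D t (D.S ((D.S ^ d) y)) = _
    rw [evY_S D h, ih]; ring

lemma B_pow_S_pow (D : ShiftData Y) (d : ℕ) (y : Y) : (D.B ^ d) ((D.S ^ d) y) = y := by
  induction d with
  | zero => simp
  | succ d ih =>
    rw [pow_succ' D.S, pow_succ D.B]
    change (D.B ^ d) (D.B (D.S ((D.S ^ d) y))) = _
    rw [D.BS, ih]

theorem wdiv_aux (D : ShiftData Y) (f g : V × ℝ → ℝ) (hf : AnalyticAt ℝ f 0) (hg : AnalyticAt ℝ g 0) (d : ℕ)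
    (u : ℝ → ℝ) (hu : AnalyticAt ℝ u 0) (hu0 : u 0 ≠ 0)
    (hfd : ∀ᶠ t in 𝓝 (0:ℝ), f (0, t) = t ^ d * u t) :
    ∃ q : V × ℝ → ℝ, AnalyticAt ℝ q 0 ∧ ∃ r : ℕ → V → ℝ, (∀ i, AnalyticAt ℝ (r i) 0) ∧
      ∀ᶠ z in 𝓝 (0 : V × ℝ), g z = q z * f z + ∑ i ∈ Finset.range d, r i z.1 * z.2 ^ i := by
  obtain ⟨ρf, hρf, Hf⟩ := mulOp D f hf
  obtain ⟨ρg, hρg, Hg⟩ := mulOp D g hg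
  obtain ⟨ρu, hρu, Hu⟩ := mulOpUnit D u hu hu0
  obtain ⟨ρ, hρ, hρm⟩ := exists_between (lt_min hρf (lt_min hρg hρu))
  obtain ⟨Mf, Mfa, Mfe⟩ := Hf ρ hρ (hρm.trans_le (min_le_left _ _))
  obtain ⟨Mg, Mga, Mge⟩ := Hg ρ hρ (hρm.trans_le ((min_le_right _ _).trans (min_le_left _ _)))
  obtain ⟨Mu, Muu, Mue⟩ := Hu ρ hρ (hρm.trans_le ((min_le_right _ _).trans (min_le_right _ _)))
  have hsc : ContinuousAt (fun t : ℝ => ρ * t) 0 := Continuous.continuousAt (by fun_prop)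
  have hMf0 : ∀ y, Mf 0 y = ρ ^ d • (D.S ^ d) (Mu y) := by
    intro y
    rw [← sub_eq_zero]
    refine evY_sep D _ ?_
    have e1 : ∀ᶠ t : ℝ in 𝓝 0, ∀ y, evY D t (Mf 0 y) = f (0, ρ * t) * evY D t y := by
      have : ContinuousAt (fun t : ℝ => ((0 : V), t)) 0 := Continuous.continuousAt (by fun_prop)
      exact this.eventually Mfe
    have e2 : ∀ᶠ t : ℝ in 𝓝 0, f (0, ρ * t) = (ρ * t) ^ d * u (ρ * t) := by
      refine hsc.eventually (p := fun t => f (0, t) = t ^ d * u t) ?_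
      simpa using hfd
    filter_upwards [e1, e2, Mue, eventually_unit D] with t h1 h2 h3 h4
    rw [map_sub, h1, h2, map_smul, evY_S_pow D h4, h3, smul_eq_mul]
    ring
  let Ψ : V → (Y →L[ℝ] Y) := fun x => D.B ^ d * Mf x
  have hΨa : AnalyticAt ℝ Ψ 0 := AnalyticAt.mul analyticAt_const Mfa
  have hΨ0 : Ψ 0 = ρ ^ d • Mu := by
    ext y
    change (D.B ^ d) (Mf 0 y) = _
    rw [hMf0, map_smul, B_pow_S_pow]; rfl
  have hΨu : IsUnit (Ψ 0) := by
    rw [hΨ0]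
    exact isUnit_smul' (pow_ne_zero _ hρ.ne') Muu
  have hΨe : ∀ᶠ x in 𝓝 (0 : V), IsUnit (Ψ x) := by
    refine hΨa.continuousAt.eventually ?_
    exact eventually_isUnit' hΨu
  let I : V → (Y →L[ℝ] Y) := fun x => Ring.inverse (Ψ x)
  have hIa : AnalyticAt ℝ I 0 := by
    refine AnalyticAt.fun_comp ?_ hΨa
    simpa using analyticAt_inverse (𝕜 := ℝ) (A := Y →L[ℝ] Y) hΨu.unit
  let qy : V → Y := fun x => I x ((D.B ^ d) (Mg x D.e))
  have hqy : AnalyticAt ℝ qy 0 := by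
    refine an_apply hIa ?_
    refine an_apply analyticAt_const ?_
    exact an_apply Mga analyticAt_const
  let ry : V → Y := fun x => Mg x D.e - Mf x (qy x)
  have hry : AnalyticAt ℝ ry 0 :=
    (an_apply Mga analyticAt_const).sub (an_apply Mfa hqy)
  have hB : ∀ᶠ x in 𝓝 (0 : V), (D.B ^ d) (ry x) = 0 := by
    filter_upwards [hΨe] with x hx
    have h1 : Ψ x * I x = 1 := Ring.mul_inverse_cancel _ hx
    have h2 := congrArg (fun A => A ((D.B ^ d) (Mg x D.e))) h1
    simp only [ry, map_sub]
    change (D.B ^ d) (Mf x (qy x)) = (D.B ^ d) (Mg x D.e) at h2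
    rw [h2, sub_self]
  have hres : AnalyticAt ℝ (fun z : V × ℝ => resB D (ρ⁻¹ * z.2)) 0 := by
    refine AnalyticAt.fun_comp (g := resB D) (f := fun z : V × ℝ => ρ⁻¹ * z.2) ?_ ?_
    · simpa using analyticAt_resB D
    · exact analyticAt_const.mul analyticAt_snd
  have hfst : AnalyticAt ℝ (fun z : V × ℝ => qy z.1) 0 :=
    AnalyticAt.fun_comp (g := qy) (f := fun z : V × ℝ => z.1) hqy analyticAt_fst
  refine ⟨fun z => evY D (ρ⁻¹ * z.2) (qy z.1), ?_,
    fun i x => (ρ⁻¹) ^ i * D.c ((D.B ^ i) (ry x)), ?_, ?_⟩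
  · exact an_apply (f := fun _ => D.c) analyticAt_const (an_apply hres hfst)
  · intro i
    refine AnalyticAt.mul analyticAt_const ?_
    exact an_apply (f := fun _ => D.c) analyticAt_const
      (an_apply (f := fun _ => D.B ^ i) analyticAt_const hry)
  · have hs : ContinuousAt (fun z : V × ℝ => (z.1, ρ⁻¹ * z.2)) 0 := Continuous.continuousAt (by fun_prop)
    have t1 : Tendsto (fun z : V × ℝ => (z.1, ρ⁻¹ * z.2)) (𝓝 0) (𝓝 0) := by
      have h := hs.tendsto
      rw [show ((0 : V × ℝ).1, ρ⁻¹ * (0 : V × ℝ).2) = 0 by simp] at h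
      exact h
    have t2 : Tendsto (fun z : V × ℝ => ρ⁻¹ * z.2) (𝓝 0) (𝓝 0) := by
      have := (continuous_snd.tendsto (0 : V × ℝ)).comp t1
      exact this
    have t3 : Tendsto (fun z : V × ℝ => z.1) (𝓝 0) (𝓝 0) := continuous_fst.tendsto (0 : V × ℝ)
    filter_upwards [t1.eventually Mfe, t1.eventually Mge, t2.eventually (eventually_unit D),
      t3.eventually hB] with z h1 h2 h3 h4
    have hr := taylor_split D d (ry z.1)
    rw [h4, map_zero, zero_add] at hr
    have h5 : Mg z.1 D.e = Mf z.1 (qy z.1) + ry z.1 := by simp [ry]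
    have h6 := congrArg (evY D (ρ⁻¹ * z.2)) h5
    rw [map_add, h1, h2, evY_e D h3, hr, map_sum] at h6
    simp only [mul_inv_cancel_left₀ hρ.ne', mul_one] at h6
    rw [h6]
    congr 1
    · ring
    · refine Finset.sum_congr rfl fun i _ => ?_
      rw [map_smul, evY_S_pow D h3, evY_e D h3, smul_eq_mul]
      ring

theorem wdiv (f g : V × ℝ → ℝ) (hf : AnalyticAt ℝ f 0) (hg : AnalyticAt ℝ g 0) (d : ℕ)
    (u : ℝ → ℝ) (hu : AnalyticAt ℝ u 0) (hu0 : u 0 ≠ 0)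
    (hfd : ∀ᶠ t in 𝓝 (0:ℝ), f (0, t) = t ^ d * u t) :
    ∃ q : V × ℝ → ℝ, AnalyticAt ℝ q 0 ∧ ∃ r : ℕ → V → ℝ, (∀ i, AnalyticAt ℝ (r i) 0) ∧
      ∀ᶠ z in 𝓝 (0 : V × ℝ), g z = q z * f z + ∑ i ∈ Finset.range d, r i z.1 * z.2 ^ i :=
  wdiv_aux seqShift f g hf hg d u hu hu0 hfd
end WD

section TG

/-- Formal tangent vector at the generic point of an ultrafilter. -/
def HasTangent {V : Type} [NormedAddCommGroup V] [NormedSpace ℝ V] (U : Ultrafilter V) : Prop :=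
  ∃ ξ : V → V, AnalyticAt ℝ ξ 0 ∧ (∀ᶠ x in (U : Filter V), ξ x ≠ 0) ∧
    ∀ f : V → ℝ, AnalyticAt ℝ f 0 → (∀ᶠ x in (U : Filter V), f x = 0) →
      ∀ᶠ x in (U : Filter V), fderiv ℝ f x (ξ x) = 0

lemma HasTangent.transport {V W : Type} [NormedAddCommGroup V] [NormedSpace ℝ V]
    [NormedAddCommGroup W] [NormedSpace ℝ W] (e : V ≃L[ℝ] W) (U : Ultrafilter V)
    (h : HasTangent (U.map e)) : HasTangent U := by
  obtain ⟨ξ, h1, h2, h3⟩ := h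
  refine ⟨fun x => e.symm (ξ (e x)), ?_, ?_, ?_⟩
  · refine AnalyticAt.fun_comp (g := e.symm) (ContinuousLinearMap.analyticAt (e.symm : W →L[ℝ] V) _) ?_
    refine AnalyticAt.fun_comp (g := ξ) (f := e) ?_ (ContinuousLinearMap.analyticAt (e : V →L[ℝ] W) _)
    simpa using h1
  · rw [Ultrafilter.coe_map, eventually_map] at h2
    filter_upwards [h2] with x hx
    simpa using hx
  · intro f hf hfU
    have := h3 (fun y => f (e.symm y)) ?_ ?_
    · rw [Ultrafilter.coe_map, eventually_map] at this
      filter_upwards [this] with x hx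
      have h4 : fderiv ℝ (f ∘ e.symm) (e x) = (fderiv ℝ f (e.symm (e x))).comp (e.symm : W →L[ℝ] V) :=
        e.symm.comp_right_fderiv
      change fderiv ℝ (f ∘ e.symm) (e x) (ξ (e x)) = 0 at hx
      rw [h4] at hx
      simpa using hx
    · refine AnalyticAt.fun_comp (g := f) (f := e.symm) ?_ (ContinuousLinearMap.analyticAt (e.symm : W →L[ℝ] V) _)
      simpa using hf
    · rw [Ultrafilter.coe_map, eventually_map]
      simpa using hfU

variable {V : Type} [NormedAddCommGroup V] [NormedSpace ℝ V] 

/-- polynomial in the last variable with function coefficients -/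
def fpoly (N : ℕ) (r : ℕ → V → ℝ) (z : V × ℝ) : ℝ := ∑ i ∈ Finset.range N, r i z.1 * z.2 ^ i

lemma fst_analytic {r : V → ℝ} (h : AnalyticAt ℝ r 0) : AnalyticAt ℝ (fun z : V × ℝ => r z.1) 0 :=
  AnalyticAt.fun_comp (g := r) (f := fun z : V × ℝ => z.1) h analyticAt_fst

lemma fpoly_analytic (N : ℕ) {r : ℕ → V → ℝ} (h : ∀ i, AnalyticAt ℝ (r i) 0) :
    AnalyticAt ℝ (fpoly N r) 0 := by
  unfold fpoly
  refine Finset.analyticAt_fun_sum _ fun i _ => ?_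
  exact (fst_analytic (h i)).mul (analyticAt_snd.pow i)

lemma fpoly_fderiv (N : ℕ) {r : ℕ → V → ℝ} (z : V × ℝ)
    (h : ∀ i < N, DifferentiableAt ℝ (r i) z.1) (v : V × ℝ) :
    fderiv ℝ (fpoly N r) z v = ∑ i ∈ Finset.range N,
      (fderiv ℝ (r i) z.1 v.1 * z.2 ^ i + r i z.1 * (i * z.2 ^ (i-1)) * v.2) := by
  have : HasFDerivAt (fpoly N r) (∑ i ∈ Finset.range N,
      (r i z.1 • ((i * z.2 ^ (i-1)) • ContinuousLinearMap.snd ℝ V ℝ)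
        + z.2 ^ i • ((fderiv ℝ (r i) z.1).comp (ContinuousLinearMap.fst ℝ V ℝ)))) z := by
    unfold fpoly
    refine HasFDerivAt.fun_sum fun i hi => ?_
    refine HasFDerivAt.mul (c := fun z : V × ℝ => r i z.1) (d := fun z : V × ℝ => z.2 ^ i) ?_ ?_
    · exact HasFDerivAt.comp z (h i (Finset.mem_range.1 hi)).hasFDerivAt hasFDerivAt_fst
    · exact (hasDerivAt_pow i z.2).comp_hasFDerivAt z hasFDerivAt_snd
  rw [this.fderiv]
  simp only [_root_.sum_apply, add_apply, smul_apply, ContinuousLinearMap.comp_apply,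
    ContinuousLinearMap.coe_fst', ContinuousLinearMap.coe_snd', smul_eq_mul]
  refine Finset.sum_congr rfl fun i _ => ?_
  ring

lemma fpoly_reduce (m s : ℕ) (a r : ℕ → V → ℝ) (z : V × ℝ) :
    fpoly (s + m) (fun i x => a m x * r i x - r (s+m) x * (if s ≤ i then a (i - s) x else 0)) z =
      a m z.1 * fpoly (s + m + 1) r z - (r (s+m) z.1 * z.2 ^ s) * fpoly (m+1) a z := by
  have h1 : fpoly (m+1) a z * z.2 ^ s =
      ∑ i ∈ Finset.range (s + (m + 1)), (if s ≤ i then a (i - s) z.1 else 0) * z.2 ^ i := by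
    rw [Finset.sum_range_add, Finset.sum_eq_zero, zero_add]
    · unfold fpoly
      rw [Finset.sum_mul]
      refine Finset.sum_congr rfl fun i _ => ?_
      simp [pow_add]; ring
    · intro i hi
      rw [Finset.mem_range] at hi
      rw [if_neg (by omega)]; simp
  have h2 : (r (s+m) z.1 * z.2 ^ s) * fpoly (m+1) a z = r (s+m) z.1 * (fpoly (m+1) a z * z.2 ^ s) := by ring
  rw [h2, h1, ← add_assoc, Finset.sum_range_succ]
  unfold fpoly
  rw [Finset.sum_range_succ _ (s+m)]
  simp only [Nat.le_add_right, if_true, Nat.add_sub_cancel_left]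
  have : ∀ i, (a m z.1 * r i z.1 - r (s+m) z.1 * (if s ≤ i then a (i - s) z.1 else 0)) * z.2 ^ i =
    a m z.1 * (r i z.1 * z.2 ^ i) - r (s+m) z.1 * ((if s ≤ i then a (i - s) z.1 else 0) * z.2 ^ i) := by
    intro i; ring
  simp only [this, Finset.sum_sub_distrib, ← Finset.mul_sum]
  ring

lemma monic_not_zero (d : ℕ) (c : ℕ → ℝ) :
    ¬ ∀ᶠ t in 𝓝 (0:ℝ), t ^ d - ∑ i ∈ Finset.range d, c i * t ^ i = 0 := by
  intro h
  let P : Polynomial ℝ := Polynomial.X ^ d - ∑ i ∈ Finset.range d, Polynomial.C (c i) * Polynomial.X ^ i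
  have hP : P = 0 := by
    refine Polynomial.eq_zero_of_infinite_isRoot P ?_
    obtain ⟨ε, hε, hb⟩ := Metric.eventually_nhds_iff_ball.1 h
    refine Set.Infinite.mono (s := Metric.ball 0 ε) ?_ ?_
    · intro t ht
      have := hb t ht
      simpa [P, Polynomial.IsRoot, Polynomial.eval_finsetSum] using this
    · rw [Real.ball_eq_Ioo]
      exact Set.Ioo_infinite (by linarith)
  have := congrArg (fun Q => Polynomial.coeff Q d) hP
  simp only [P, Polynomial.coeff_sub, Polynomial.coeff_X_pow, Polynomial.finsetSum_coeff, Polynomial.coeff_C_mul] at this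
  rw [Finset.sum_eq_zero] at this
  · simp at this
  · intro i hi
    rw [Finset.mem_range] at hi
    rw [if_neg (by omega)]; simp

lemma exists_order {f : V × ℝ → ℝ} (hf : AnalyticAt ℝ f 0) (h : ¬ ∀ᶠ t in 𝓝 (0:ℝ), f (0, t) = 0) :
    ∃ d : ℕ, ∃ u : ℝ → ℝ, AnalyticAt ℝ u 0 ∧ u 0 ≠ 0 ∧ ∀ᶠ t in 𝓝 (0:ℝ), f (0, t) = t ^ d * u t := by
  have h1 : AnalyticAt ℝ (fun t : ℝ => f (0, t)) 0 :=
    AnalyticAt.fun_comp (g := f) (f := fun t : ℝ => ((0 : V), t)) hf (analyticAt_const.prod analyticAt_id)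
  obtain ⟨d, u, hu, hu0, he⟩ := h1.exists_eventuallyEq_pow_smul_nonzero_iff.2 h
  exact ⟨d, u, hu, hu0, by simpa using he⟩

lemma fderiv_mul_apply' {E : Type} [NormedAddCommGroup E] [NormedSpace ℝ E] {p q : E → ℝ} {z : E}
    (hp : DifferentiableAt ℝ p z) (hq : DifferentiableAt ℝ q z) (v : E) :
    fderiv ℝ (fun z => p z * q z) z v = p z * fderiv ℝ q z v + q z * fderiv ℝ p z v := by
  rw [fderiv_fun_mul hp hq]; simp

lemma AnalyticAt.evdiff {E : Type} [NormedAddCommGroup E] [NormedSpace ℝ E] {p : E → ℝ} {x : E}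
    (hp : AnalyticAt ℝ p x) : ∀ᶠ z in 𝓝 x, DifferentiableAt ℝ p z :=
  hp.eventually_analyticAt.mono fun _ h => h.differentiableAt

theorem tangent_step [FiniteDimensional ℝ V]
    (IH : ∀ U' : Ultrafilter V, (U' : Filter V) ≤ 𝓝[≠] 0 → HasTangent U')
    (U : Ultrafilter (V × ℝ)) (hU : (U : Filter (V × ℝ)) ≤ 𝓝[≠] 0)
    (f : V × ℝ → ℝ) (hf : AnalyticAt ℝ f 0) (hfU : ∀ᶠ z in (U : Filter (V × ℝ)), f z = 0)
    (hf0 : ¬ ∀ᶠ t in 𝓝 (0:ℝ), f (0, t) = 0) : HasTangent U := by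
  have hU0 : (U : Filter (V × ℝ)) ≤ 𝓝 0 := hU.trans nhdsWithin_le_nhds
  obtain ⟨d, u, hu, hu0, hfd⟩ := exists_order hf hf0
  let U' : Ultrafilter V := U.map Prod.fst
  have hmapE : ∀ {P : V → Prop}, (∀ᶠ x in (U' : Filter V), P x) ↔ ∀ᶠ z in (U : Filter (V × ℝ)), P z.1 := by
    intro P
    simp only [U', Ultrafilter.coe_map, eventually_map]
  have hU'0 : (U' : Filter V) ≤ 𝓝 0 := by
    have : Tendsto Prod.fst (U : Filter (V × ℝ)) (𝓝 (0 : V)) :=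
      (continuous_fst.tendsto (0 : V × ℝ)).mono_left hU0
    exact this
  have hU' : (U' : Filter V) ≤ 𝓝[≠] 0 := by
    rw [nhdsWithin, le_inf_iff, le_principal_iff]
    refine ⟨hU'0, ?_⟩
    change ∀ᶠ x in (U' : Filter V), x ≠ 0
    refine Ultrafilter.eventually_not.2 fun hx => ?_
    rw [hmapE] at hx
    have h1 : Tendsto Prod.snd (U : Filter (V × ℝ)) (𝓝 (0 : ℝ)) :=
      (continuous_snd.tendsto (0 : V × ℝ)).mono_left hU0
    have h2 : ∀ᶠ z in (U : Filter (V × ℝ)), z ≠ 0 := hU self_mem_nhdsWithin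
    have h3 : ∀ᶠ t in 𝓝 (0:ℝ), u t ≠ 0 := hu.continuousAt.eventually_ne hu0
    obtain ⟨z, k1, k2, k3, k4, k5⟩ := (hx.and (h2.and (hfU.and ((h1.eventually hfd).and (h1.eventually h3))))).exists
    have hz : z = (0, z.2) := Prod.ext k1 rfl
    rw [hz, k4] at k3
    have : z.2 ^ d ≠ 0 := by
      refine pow_ne_zero _ fun h => k2 ?_
      rw [hz, h]; rfl
    exact (mul_ne_zero this k5) k3
  obtain ⟨ξ', hξa, hξ0, hξD⟩ := IH U' hU'
  -- monic relation
  obtain ⟨q0, hq0, r0, hr0, hdiv⟩ := wdiv f (fun z => z.2 ^ d) hf (analyticAt_snd.pow d) d u hu hu0 hfd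
  let w : ℕ → V → ℝ := fun i => if i = d then fun _ => 1 else fun x => - r0 i x
  have hw : ∀ i, AnalyticAt ℝ (w i) 0 := by
    intro i
    by_cases h : i = d
    · simp only [w, h, if_true]; exact analyticAt_const
    · simp only [w, h, if_false]; exact (hr0 i).neg
  have hweq : ∀ z : V × ℝ, fpoly (d+1) w z = z.2 ^ d - ∑ i ∈ Finset.range d, r0 i z.1 * z.2 ^ i := by
    intro z
    unfold fpoly
    rw [Finset.sum_range_succ, sub_eq_add_neg, add_comm, ← Finset.sum_neg_distrib]
    congr 1
    · simp [w]
    · refine Finset.sum_congr rfl fun i hi => ?_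
      rw [Finset.mem_range] at hi
      simp [w, hi.ne]
  have hwU : ∀ᶠ z in (U : Filter (V × ℝ)), fpoly (d+1) w z = 0 := by
    filter_upwards [hfU, hU0 hdiv] with z h1 h2
    rw [hweq]
    have h2 : z.2 ^ d = q0 z * f z + ∑ i ∈ Finset.range d, r0 i z.1 * z.2 ^ i := h2
    rw [h2, h1]; ring
  let Rel : ℕ → Prop := fun m => ∃ a : ℕ → V → ℝ, (∀ i, AnalyticAt ℝ (a i) 0) ∧
    (∀ᶠ x in (U' : Filter V), a m x ≠ 0) ∧ ∀ᶠ z in (U : Filter (V × ℝ)), fpoly (m+1) a z = 0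
  have hRel : ∃ m, Rel m := ⟨d, w, hw, Eventually.of_forall (by simp [w]), hwU⟩
  classical
  obtain ⟨a, ha, ham, haU⟩ := Nat.find_spec hRel
  have hminR : ∀ k < Nat.find hRel, ¬ Rel k := fun k hk => Nat.find_min hRel hk
  set m := Nat.find hRel with hm
  clear_value m
  have hmin : ∀ N ≤ m, ∀ b : ℕ → V → ℝ, (∀ i, AnalyticAt ℝ (b i) 0) →
      (∀ᶠ z in (U : Filter (V × ℝ)), fpoly N b z = 0) → ∀ i < N, ∀ᶠ x in (U' : Filter V), b i x = 0 := by
    intro N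
    induction N with
    | zero => intro _ b _ _ i hi; omega
    | succ N ih =>
      intro hN b hb hbU
      have hbN : ∀ᶠ x in (U' : Filter V), b N x = 0 := by
        by_contra hcon
        rw [← Ultrafilter.eventually_not] at hcon
        exact hminR N (by omega) ⟨b, hb, hcon, hbU⟩
      have hbU' : ∀ᶠ z in (U : Filter (V × ℝ)), fpoly N b z = 0 := by
        filter_upwards [hbU, hmapE.1 hbN] with z h1 h2
        unfold fpoly at h1 ⊢
        rw [Finset.sum_range_succ, h2] at h1
        simpa using h1
      intro i hi
      rcases Nat.lt_succ_iff_lt_or_eq.1 hi with h | h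
      · exact ih (by omega) b hb hbU' i h
      · rw [h]; exact hbN
  have hm1 : 1 ≤ m := by
    by_contra hcon
    have hm0 : m = 0 := by omega
    obtain ⟨z, h1, h2⟩ := (haU.and (hmapE.1 ham)).exists
    rw [hm0] at h1 h2
    simp [fpoly] at h1
    exact h2 h1
  let at' : V × ℝ → ℝ := fun z => ∑ i ∈ Finset.range (m+1), a i z.1 * (i * z.2 ^ (i-1))
  have hat : ∀ z, at' z = fpoly m (fun i x => ((i:ℝ)+1) * a (i+1) x) z := by
    intro z
    simp only [at', fpoly]
    rw [Finset.sum_range_succ']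
    simp only [Nat.cast_zero, zero_mul, mul_zero, add_zero, Nat.add_sub_cancel]
    refine Finset.sum_congr rfl fun i _ => ?_
    push_cast; ring
  have hata : AnalyticAt ℝ at' 0 := by
    rw [funext hat]
    exact fpoly_analytic _ fun i => analyticAt_const.mul (ha _)
  have hatU : ∀ᶠ z in (U : Filter (V × ℝ)), at' z ≠ 0 := by
    refine Ultrafilter.eventually_not.2 fun hz => ?_
    have hz' : ∀ᶠ z in (U : Filter (V × ℝ)), fpoly m (fun i x => ((i:ℝ)+1) * a (i+1) x) z = 0 := by
      filter_upwards [hz] with z h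
      rw [← hat]; exact h
    have h1 := hmin m le_rfl _ (fun i => analyticAt_const.mul (ha (i+1))) hz' (m-1) (by omega)
    obtain ⟨x, h2, h3⟩ := (h1.and ham).exists
    rw [Nat.sub_add_cancel hm1] at h2
    rcases mul_eq_zero.1 h2 with h | h
    · have : (0:ℝ) ≤ ((m-1 : ℕ):ℝ) := Nat.cast_nonneg _
      linarith
    · exact h3 h
  have hDiff : ∀ {p : V → ℝ}, AnalyticAt ℝ p 0 → ∀ᶠ z in (U : Filter (V × ℝ)), DifferentiableAt ℝ p z.1 := by
    intro p hp
    exact hmapE.1 (hU'0 hp.evdiff)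
  have hDiffAll : ∀ {N : ℕ} {r : ℕ → V → ℝ}, (∀ i, AnalyticAt ℝ (r i) 0) →
      ∀ᶠ z in (U : Filter (V × ℝ)), ∀ i < N, DifferentiableAt ℝ (r i) z.1 := by
    intro N r hr
    have : ∀ᶠ z in (U : Filter (V × ℝ)), ∀ i ∈ Finset.range N, DifferentiableAt ℝ (r i) z.1 :=
      (Finset.eventually_all _).2 fun i _ => hDiff (hr i)
    simpa using this
  let ξ : V × ℝ → V × ℝ := fun z =>
    (at' z • ξ' z.1, - ∑ i ∈ Finset.range (m+1), fderiv ℝ (a i) z.1 (ξ' z.1) * z.2 ^ i)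
  have hξfst : AnalyticAt ℝ (fun z : V × ℝ => ξ' z.1) 0 :=
    AnalyticAt.fun_comp (g := ξ') (f := fun z : V × ℝ => z.1) hξa analyticAt_fst
  have hξan : AnalyticAt ℝ ξ 0 := by
    refine AnalyticAt.prod (hata.smul hξfst) ?_
    refine AnalyticAt.neg ?_
    refine Finset.analyticAt_fun_sum _ fun i _ => ?_
    refine AnalyticAt.mul ?_ (analyticAt_snd.pow i)
    refine an_apply ?_ hξfst
    exact AnalyticAt.fun_comp (g := fderiv ℝ (a i)) (f := fun z : V × ℝ => z.1) (ha i).fderiv analyticAt_fst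
  have hDa : ∀ᶠ z in (U : Filter (V × ℝ)), fderiv ℝ (fpoly (m+1) a) z (ξ z) = 0 := by
    filter_upwards [hDiffAll (N := m+1) ha] with z hz
    rw [fpoly_fderiv _ _ hz]
    rw [Finset.sum_add_distrib, ← Finset.sum_mul]
    change _ + at' z * (- ∑ i ∈ Finset.range (m+1), fderiv ℝ (a i) z.1 (ξ' z.1) * z.2 ^ i) = 0
    have h5 : ∑ i ∈ Finset.range (m+1), fderiv ℝ (a i) z.1 (at' z • ξ' z.1) * z.2 ^ i
        = at' z * ∑ i ∈ Finset.range (m+1), fderiv ℝ (a i) z.1 (ξ' z.1) * z.2 ^ i := by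
      rw [Finset.mul_sum]
      refine Finset.sum_congr rfl fun i _ => ?_
      rw [map_smul, smul_eq_mul, mul_assoc]
    change ∑ i ∈ Finset.range (m+1), fderiv ℝ (a i) z.1 (at' z • ξ' z.1) * z.2 ^ i + _ = 0
    rw [h5]
    ring
  have hDpoly : ∀ (N : ℕ) (r : ℕ → V → ℝ), (∀ i, AnalyticAt ℝ (r i) 0) →
      (∀ᶠ z in (U : Filter (V × ℝ)), fpoly N r z = 0) →
      ∀ᶠ z in (U : Filter (V × ℝ)), fderiv ℝ (fpoly N r) z (ξ z) = 0 := by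
    intro N
    induction N with
    | zero =>
      intro r hr _
      refine Eventually.of_forall fun z => ?_
      rw [fpoly_fderiv _ _ (by simp)]; simp
    | succ N ih =>
      intro r hr hrU
      by_cases hN : N + 1 ≤ m
      · have h0 := hmin _ hN r hr hrU
        have h1 : ∀ᶠ z in (U : Filter (V × ℝ)), ∀ i ∈ Finset.range (N+1),
            r i z.1 = 0 ∧ fderiv ℝ (r i) z.1 (ξ' z.1) = 0 := by
          refine (Finset.eventually_all _).2 fun i hi => ?_
          have h2 := h0 i (Finset.mem_range.1 hi)
          exact (hmapE.1 h2).and (hmapE.1 (hξD _ (hr i) h2))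
        filter_upwards [hDiffAll (N := N+1) hr, h1] with z hz h1
        rw [fpoly_fderiv _ _ hz]
        refine Finset.sum_eq_zero fun i hi => ?_
        simp [ξ, h1 i hi]
      · obtain ⟨s, rfl⟩ : ∃ s, N = s + m := ⟨N - m, by omega⟩
        let r' : ℕ → V → ℝ := fun i x => a m x * r i x - r (s+m) x * (if s ≤ i then a (i - s) x else 0)
        have hr' : ∀ i, AnalyticAt ℝ (r' i) 0 := by
          intro i
          refine ((ha m).mul (hr i)).sub ((hr _).mul ?_)
          by_cases h : s ≤ i
          · simp only [h, if_true]; exact ha _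
          · simp only [h, if_false]; exact analyticAt_const
        have heq : fpoly (s+m) r' = fun z => a m z.1 * fpoly (s + m + 1) r z
            - (r (s+m) z.1 * z.2 ^ s) * fpoly (m+1) a z := funext fun z => fpoly_reduce m s a r z
        have hzero : ∀ᶠ z in (U : Filter (V × ℝ)), fpoly (s+m) r' z = 0 := by
          filter_upwards [hrU, haU] with z h1 h2
          rw [heq]; simp only [h1, h2]; ring
        have hD := ih r' hr' hzero
        filter_upwards [hD, hrU, haU, hDa, hmapE.1 ham, hU0 (fst_analytic (ha m)).evdiff,
          hU0 (fpoly_analytic (s+m+1) hr).evdiff, hU0 (fpoly_analytic (m+1) ha).evdiff,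
          hU0 ((fst_analytic (hr (s+m))).mul (analyticAt_snd.pow s)).evdiff] with z h1 h2 h3 h4 h5 d1 d2 d3 d4
        have d4 : DifferentiableAt ℝ (fun z : V × ℝ => r (s+m) z.1 * z.2 ^ s) z := d4
        rw [heq, fderiv_fun_sub (d1.fun_mul d2) (d4.fun_mul d3), sub_apply,
          fderiv_mul_apply' d1 d2, fderiv_mul_apply' d4 d3, h2, h3, h4] at h1
        simp only [zero_mul, mul_zero, add_zero, sub_zero] at h1
        exact (mul_eq_zero.1 h1).resolve_left h5
  refine ⟨ξ, hξan, ?_, ?_⟩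
  · filter_upwards [hatU, hmapE.1 hξ0] with z h1 h2 h3
    have := congrArg Prod.fst h3
    simp only [ξ, Prod.fst_zero, smul_eq_zero] at this
    tauto
  · intro g hg hgU
    have hW0 : ¬ ∀ᶠ t in 𝓝 (0:ℝ), fpoly (d+1) w ((0 : V), t) = 0 := by
      simp only [hweq]
      exact monic_not_zero d (fun i => r0 i 0)
    obtain ⟨d', u', hu', hu0', hWd⟩ := exists_order (fpoly_analytic (d+1) hw) hW0
    obtain ⟨q, hq, r, hr, hdiv'⟩ := wdiv _ g (fpoly_analytic (d+1) hw) hg d' u' hu' hu0' hWd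
    have hdiv'' : ∀ᶠ z in 𝓝 (0 : V × ℝ), g z = q z * fpoly (d+1) w z + fpoly d' r z := hdiv'
    have hrU : ∀ᶠ z in (U : Filter (V × ℝ)), fpoly d' r z = 0 := by
      filter_upwards [hgU, hwU, hU0 hdiv''] with z h1 h2 h3
      have h3 : g z = q z * fpoly (d+1) w z + fpoly d' r z := h3
      rw [h1, h2] at h3
      linarith
    filter_upwards [hDpoly _ _ hr hrU, hDpoly _ _ hw hwU, hwU, hU0 hdiv''.eventually_nhds,
      hU0 hq.evdiff, hU0 (fpoly_analytic (d+1) hw).evdiff, hU0 (fpoly_analytic d' hr).evdiff]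
      with z h1 h2 h3 h4 d1 d2 d3
    have h4 : g =ᶠ[𝓝 z] fun z => q z * fpoly (d+1) w z + fpoly d' r z := h4
    rw [h4.fderiv_eq, fderiv_fun_add (d1.fun_mul d2) d3, add_apply, fderiv_mul_apply' d1 d2, h1, h2, h3]
    simp

end TG

section TD

lemma tangent_exists (k : ℕ) : ∀ (V : Type) [NormedAddCommGroup V] [NormedSpace ℝ V]
    [FiniteDimensional ℝ V], Module.finrank ℝ V = k →
    ∀ U : Ultrafilter V, (U : Filter V) ≤ 𝓝[≠] 0 → HasTangent U := by
  induction k with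
  | zero =>
    intro V _ _ _ hV U hU
    exfalso
    have : Subsingleton V := Module.finrank_zero_iff.1 hV
    have h2 : ∀ᶠ z in (U : Filter V), z ≠ 0 := hU self_mem_nhdsWithin
    obtain ⟨z, hz⟩ := h2.exists
    exact hz (Subsingleton.elim _ _)
  | succ k ih =>
    intro V _ _ _ hV U hU
    have hU0 : (U : Filter V) ≤ 𝓝 0 := hU.trans nhdsWithin_le_nhds
    by_cases hall : ∀ f : V → ℝ, AnalyticAt ℝ f 0 → (∀ᶠ x in (U : Filter V), f x = 0) →
        ∀ᶠ x in 𝓝 (0:V), f x = 0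
    · have h2 : ∀ᶠ z in (U : Filter V), z ≠ 0 := hU self_mem_nhdsWithin
      obtain ⟨z, hz⟩ := h2.exists
      refine ⟨fun _ => z, analyticAt_const, Eventually.of_forall fun _ => hz, ?_⟩
      intro f hf hfU
      have h3 := (hall f hf hfU).eventually_nhds
      filter_upwards [hU0 h3] with x hx
      have hx : f =ᶠ[𝓝 x] fun _ => (0:ℝ) := hx
      rw [hx.fderiv_eq]; simp
    · push Not at hall
      obtain ⟨f, hf, hfU, hf0⟩ := hall
      have hf00 : f 0 = 0 := by
        have h1 : Tendsto f (U : Filter V) (𝓝 (f 0)) := hf.continuousAt.tendsto.mono_left hU0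
        have h2 : Tendsto f (U : Filter V) (𝓝 0) :=
          tendsto_const_nhds.congr' (hfU.mono fun x hx => hx.symm)
        exact tendsto_nhds_unique h1 h2
      obtain ⟨ε, hε, hball⟩ := Metric.eventually_nhds_iff_ball.1 hf.eventually_analyticAt
      obtain ⟨x1, hx1f, hx1b⟩ := (hf0.and_eventually (Metric.ball_mem_nhds (0:V) hε)).exists
      have hline : ¬ ∀ᶠ s in 𝓝 (0:ℝ), f (s • x1) = 0 := by
        intro hcon
        have han : AnalyticOnNhd ℝ (fun s : ℝ => f (s • x1)) (Set.Icc 0 1) := by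
          intro s hs
          refine AnalyticAt.fun_comp (g := f) (f := fun s : ℝ => s • x1) (hball _ ?_)
            (analyticAt_id.smul analyticAt_const)
          have hx1b : x1 ∈ Metric.ball (0:V) ε := hx1b
          rw [mem_ball_zero_iff] at hx1b ⊢
          rw [norm_smul, Real.norm_of_nonneg hs.1]
          refine lt_of_le_of_lt ?_ hx1b
          exact mul_le_of_le_one_left (norm_nonneg _) hs.2
        have := han.eqOn_zero_of_preconnected_of_eventuallyEq_zero isPreconnected_Icc
          (Set.left_mem_Icc.2 zero_le_one) hcon (Set.right_mem_Icc.2 zero_le_one)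
        simp at this
        exact hx1f this
      have hx10 : x1 ≠ 0 := by
        rintro rfl
        exact hx1f hf00
      obtain ⟨φ, hφ⟩ := SeparatingDual.exists_eq_one (R := ℝ) hx10
      let ψ : ℝ →L[ℝ] V := ContinuousLinearMap.toSpanSingleton ℝ x1
      have hri : Function.RightInverse ψ φ := by
        intro s
        simp [ψ, hφ]
      let e0 := ContinuousLinearEquiv.equivOfRightInverse φ ψ hri
      let e : V ≃L[ℝ] φ.ker × ℝ := e0.trans (ContinuousLinearEquiv.prodComm ℝ ℝ φ.ker)
      have he : ∀ s : ℝ, e.symm (0, s) = s • x1 := by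
        intro s
        simp [e, e0, ψ]
      have hfin : Module.finrank ℝ φ.ker = k := by
        have := e.toLinearEquiv.finrank_eq
        rw [Module.finrank_prod, Module.finrank_self, hV] at this
        omega
      refine HasTangent.transport e U ?_
      refine tangent_step (fun U' hU' => ih _ hfin U' hU') (U.map e) ?_ (fun z => f (e.symm z)) ?_ ?_ ?_
      · rw [nhdsWithin, le_inf_iff, le_principal_iff]
        constructor
        · have : Tendsto e (U : Filter V) (𝓝 (e 0)) := (e.continuous.tendsto 0).mono_left hU0
          rw [map_zero] at this
          exact this
        · change ∀ᶠ x in (U : Filter V), e x ≠ 0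
          have h2 : ∀ᶠ z in (U : Filter V), z ≠ 0 := hU self_mem_nhdsWithin
          filter_upwards [h2] with x hx
          simpa using hx
      · refine AnalyticAt.fun_comp (g := f) (f := e.symm) ?_ (ContinuousLinearMap.analyticAt (e.symm : φ.ker × ℝ →L[ℝ] V) _)
        simpa using hf
      · rw [Ultrafilter.coe_map, eventually_map]
        simpa using hfU
      · simpa only [he] using hline

theorem no_acc {ι : Type} [Fintype ι] (F : (ι → ℝ) → (ι → ℝ)) (w : ι → ℝ) (hF : AnalyticAt ℝ F w)
    (Z : Set (ι → ℝ)) (hacc : AccPt w (𝓟 Z))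
    (hZ : ∀ z ∈ Z, F z = 0 ∧ Function.Injective (fderiv ℝ F z)) : False := by
  let G : (ι → ℝ) → (ι → ℝ) := fun y => F (w + y)
  have hG : AnalyticAt ℝ G 0 := by
    refine AnalyticAt.fun_comp (g := F) (f := fun y => w + y) ?_ (analyticAt_const.add analyticAt_id)
    simpa using hF
  have hGd : ∀ y, fderiv ℝ G y = fderiv ℝ F (w + y) := fun y => fderiv_comp_add_left w
  have hne : NeBot (𝓝[≠] w ⊓ 𝓟 Z) := hacc
  let U0 : Ultrafilter (ι → ℝ) := Ultrafilter.of (𝓝[≠] w ⊓ 𝓟 Z)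
  have hU0 : (U0 : Filter (ι → ℝ)) ≤ 𝓝[≠] w ⊓ 𝓟 Z := Ultrafilter.of_le _
  let U : Ultrafilter (ι → ℝ) := U0.map (fun x => x - w)
  have hU : (U : Filter (ι → ℝ)) ≤ 𝓝[≠] 0 := by
    rw [nhdsWithin, le_inf_iff, le_principal_iff]
    constructor
    · have h1 : Tendsto (fun x => x - w) (𝓝 w) (𝓝 (w - w)) := (continuous_id.sub continuous_const).tendsto w
      rw [sub_self] at h1
      exact h1.mono_left ((hU0.trans inf_le_left).trans nhdsWithin_le_nhds)
    · have h2 : ∀ᶠ x in (U0 : Filter (ι → ℝ)), x ≠ w := (hU0.trans inf_le_left) self_mem_nhdsWithin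
      change ∀ᶠ x in (U0 : Filter (ι → ℝ)), x - w ≠ 0
      filter_upwards [h2] with x hx
      exact sub_ne_zero.2 hx
  have hUZ : ∀ᶠ y in (U : Filter (ι → ℝ)), w + y ∈ Z := by
    have h2 : ∀ᶠ x in (U0 : Filter (ι → ℝ)), x ∈ Z := (hU0.trans inf_le_right) (mem_principal_self Z)
    change ∀ᶠ x in (U0 : Filter (ι → ℝ)), w + (x - w) ∈ Z
    filter_upwards [h2] with x hx
    simpa using hx
  obtain ⟨ξ, hξa, hξ0, hξD⟩ := tangent_exists _ (ι → ℝ) rfl U hU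
  have hcoord : ∀ i, AnalyticAt ℝ (fun y => G y i) 0 := fun i =>
    AnalyticAt.fun_comp (g := fun z : ι → ℝ => z i)
      (ContinuousLinearMap.analyticAt (ContinuousLinearMap.proj (R := ℝ) (φ := fun _ : ι => ℝ) i) _) hG
  have hz : ∀ᶠ y in (U : Filter (ι → ℝ)), ∀ i, fderiv ℝ (fun y => G y i) y (ξ y) = 0 := by
    rw [eventually_all]
    intro i
    refine hξD _ (hcoord i) ?_
    filter_upwards [hUZ] with y hy
    simp [G, (hZ _ hy).1]
  have hd : ∀ᶠ y in (U : Filter (ι → ℝ)), DifferentiableAt ℝ G y :=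
    (hU.trans nhdsWithin_le_nhds) (hG.eventually_analyticAt.mono fun _ h => h.differentiableAt)
  obtain ⟨y, h1, h2, h3, h4⟩ := (hUZ.and (hξ0.and (hz.and hd))).exists
  apply h2
  apply (hZ _ h1).2
  rw [map_zero, ← hGd]
  funext i
  refine Eq.trans ?_ (h3 i)
  rw [fderiv_pi (fun i => (differentiableAt_pi.1 h4 i))]
  rfl

end TD

section TE

lemma linStable_det_ne {ι : Type} [Fintype ι] [DecidableEq ι] (M : Matrix ι ι ℝ) (h : LinStable M) :
    M.det ≠ 0 := by
  intro hd
  have h1 : M.charpoly.IsRoot 0 := by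
    rw [Polynomial.IsRoot, ← Polynomial.coeff_zero_eq_eval_zero]
    have := Matrix.det_eq_sign_charpoly_coeff M
    rw [hd] at this
    exact (mul_eq_zero.1 this.symm).resolve_left (pow_ne_zero _ (by norm_num))
  have h2 : IsEigenvalue M ((algebraMap ℝ ℂ) 0) := h1.map
  have := h _ h2
  simp at this

lemma linStable_diag_neg {ι : Type} [Fintype ι] [DecidableEq ι] (M : Matrix ι ι ℝ) (h : LinStable M)
    (s : ι → ℝ) (hs : ∀ i, s i ≠ 0) (hsym : ∀ i j, M i j * s j / s i = M j i * s i / s j) (i : ι) :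
    M i i < 0 := by
  let u : (Matrix ι ι ℝ)ˣ :=
    ⟨Matrix.diagonal (fun i => (s i)⁻¹), Matrix.diagonal s, by
      rw [Matrix.diagonal_mul_diagonal, ← Matrix.diagonal_one]; congr 1; funext i; simp [hs i], by
      rw [Matrix.diagonal_mul_diagonal, ← Matrix.diagonal_one]; congr 1; funext i; simp [hs i]⟩
  let N : Matrix ι ι ℝ := u.val * M * u⁻¹.val
  have hN : ∀ i j, N i j = M i j * s j / s i := by
    intro i j
    change (Matrix.diagonal (fun i => (s i)⁻¹) * M * Matrix.diagonal s) i j = _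
    rw [Matrix.mul_diagonal, Matrix.diagonal_mul]
    field_simp
  have hch : N.charpoly = M.charpoly := by
    have := Matrix.charpoly_units_conj u M
    rwa [← Matrix.coe_units_inv] at this
  have hH : (-N).IsHermitian := by
    refine Matrix.IsHermitian.neg ?_
    ext i j
    rw [Matrix.conjTranspose_apply, star_trivial, hN, hN, hsym]
  have hpd : (-N).PosDef := by
    rw [hH.posDef_iff_eigenvalues_pos]
    intro k
    have h1 : hH.eigenvalues k ∈ spectrum ℝ (-N) := by
      rw [hH.spectrum_real_eq_range_eigenvalues]; exact ⟨k, rfl⟩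
    rw [← spectrum.neg_eq, Set.mem_neg, Matrix.mem_spectrum_iff_isRoot_charpoly, hch] at h1
    have h2 : IsEigenvalue M ((algebraMap ℝ ℂ) (- hH.eigenvalues k)) := h1.map
    have := h _ h2
    simpa using this
  have := hpd.diag_pos (i := i)
  rw [Matrix.neg_apply, hN, mul_div_assoc, div_self (hs i)] at this
  linarith

variable {n : ℕ} {α : ℝ} {p : Finset (Fin n) → ℝ} {v : Fin n → ℝ}

lemma warmD_sym (hα : 1 < α) (hv : ∀ i, 0 ≤ v i) :
    ∃ s : Fin n → ℝ, (∀ i, s i ≠ 0) ∧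
      ∀ i j, warmD α p v i j * s j / s i = warmD α p v j i * s i / s j := by
  refine ⟨fun i => if v i = 0 then 1 else √(v i), ?_, ?_⟩
  · intro i
    by_cases h : v i = 0
    · simp [h]
    · simp only [h, if_false]
      exact (Real.sqrt_pos.2 (lt_of_le_of_ne (hv i) (Ne.symm h))).ne'
  · intro i j
    by_cases hij : i = j
    · rw [hij]
    have hset : (Finset.univ.filter (fun A : Finset (Fin n) => i ∈ A ∧ j ∈ A)) =
      (Finset.univ.filter (fun A : Finset (Fin n) => j ∈ A ∧ i ∈ A)) := by
      ext A; simp [and_comm]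
    have a0 : α ≠ 0 := by linarith
    have a1 : α - 1 ≠ 0 := by linarith
    simp only [warmD, Matrix.of_apply, if_neg hij, if_neg (Ne.symm hij), hset]
    generalize (∑ A ∈ Finset.univ.filter (fun A : Finset (Fin n) => j ∈ A ∧ i ∈ A),
          p A / (∑ j ∈ A, v j ^ α) ^ 2) = C
    by_cases hi : v i = 0
    · simp [hi, Real.zero_rpow a0, Real.zero_rpow a1]
    by_cases hj : v j = 0
    · simp [hj, Real.zero_rpow a0, Real.zero_rpow a1]
    have pi : 0 < v i := lt_of_le_of_ne (hv i) (Ne.symm hi)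
    have pj : 0 < v j := lt_of_le_of_ne (hv j) (Ne.symm hj)
    simp only [hi, hj, if_false]
    rw [Real.rpow_sub_one hi, Real.rpow_sub_one hj]
    have s1 := Real.sqrt_pos.2 pi
    have s2 := Real.sqrt_pos.2 pj
    have q1 : v i = √(v i) ^ 2 := (Real.sq_sqrt pi.le).symm
    have q2 : v j = √(v j) ^ 2 := (Real.sq_sqrt pj.le).symm
    generalize v i ^ α = x
    generalize v j ^ α = y
    generalize √(v i) = a at *
    generalize √(v j) = b at *
    rw [q1, q2]
    field_simp

lemma warm_lower (hα : 1 < α) (hp0 : ∀ A, 0 ≤ p A) (hv : ∀ i, 0 ≤ v i) (hF : ∀ i, warmF α p v i = 0)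
    (hS : LinStable (warmD α p v)) (i : Fin n) (hi : 0 < v i) :
    ∃ A, 0 < p A ∧ (1 - 1/α) * p A ≤ v i := by
  obtain ⟨s, hs0, hs⟩ := warmD_sym (p := p) hα hv
  have hD := linStable_diag_neg _ hS s hs0 hs i
  have hxi : 0 < v i ^ α := Real.rpow_pos_of_pos hi _
  have hT : ∀ A : Finset (Fin n), i ∈ A → v i ^ α ≤ ∑ j ∈ A, v j ^ α := fun A hA =>
    Finset.single_le_sum (f := fun j => v j ^ α) (fun j _ => Real.rpow_nonneg (hv j) _) hA
  set B := Finset.univ.filter (fun A : Finset (Fin n) => i ∈ A) with hB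
  have hvi : v i = ∑ A ∈ B, p A * v i ^ α / (∑ j ∈ A, v j ^ α) := by
    have := hF i
    unfold warmF at this
    linarith
  have hDi : v i * warmD α p v i i = ∑ A ∈ B, p A * v i ^ α / (∑ j ∈ A, v j ^ α) *
      (-1 + α * (1 - v i ^ α / (∑ j ∈ A, v j ^ α))) := by
    have : ∀ A ∈ B, p A * v i ^ α / (∑ j ∈ A, v j ^ α) *
      (-1 + α * (1 - v i ^ α / (∑ j ∈ A, v j ^ α))) = - (p A * v i ^ α / (∑ j ∈ A, v j ^ α)) +
        α * v i ^ α * (p A * ((∑ j ∈ A, v j ^ α) - v i ^ α) / (∑ j ∈ A, v j ^ α) ^ 2) := by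
      intro A hA
      have hpos : 0 < ∑ j ∈ A, v j ^ α := lt_of_lt_of_le hxi (hT A (by simpa [hB] using hA))
      field_simp
    rw [Finset.sum_congr rfl this, Finset.sum_add_distrib, Finset.sum_neg_distrib, ← hvi, ← Finset.mul_sum]
    simp only [warmD, Matrix.of_apply, if_true]
    rw [Real.rpow_sub_one hi.ne', ← hB]
    field_simp
  have hneg : ∑ A ∈ B, p A * v i ^ α / (∑ j ∈ A, v j ^ α) *
      (-1 + α * (1 - v i ^ α / (∑ j ∈ A, v j ^ α))) < 0 := by
    rw [← hDi]; exact mul_neg_of_pos_of_neg hi hD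
  obtain ⟨A, hA, hlt⟩ : ∃ A ∈ B, p A * v i ^ α / (∑ j ∈ A, v j ^ α) *
      (-1 + α * (1 - v i ^ α / (∑ j ∈ A, v j ^ α))) < 0 := by
    by_contra hcon
    push Not at hcon
    exact absurd (Finset.sum_nonneg hcon) (not_le.2 hneg)
  have hterm : ∀ A ∈ B, 0 ≤ p A * v i ^ α / (∑ j ∈ A, v j ^ α) := fun A hA =>
    div_nonneg (mul_nonneg (hp0 A) hxi.le) (hxi.le.trans (hT A (by simpa [hB] using hA)))
  have hle : p A * v i ^ α / (∑ j ∈ A, v j ^ α) ≤ v i := by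
    conv_rhs => rw [hvi]
    exact Finset.single_le_sum hterm hA
  refine ⟨A, ?_, ?_⟩
  · refine lt_of_le_of_ne (hp0 A) fun h => ?_
    rw [← h] at hlt
    simp at hlt
  · refine le_trans ?_ hle
    have h1 : -1 + α * (1 - v i ^ α / (∑ j ∈ A, v j ^ α)) < 0 := by
      by_contra hcon
      exact absurd (mul_nonneg (hterm A hA) (not_lt.1 hcon)) (not_le.2 hlt)
    have h2 : 1 - 1/α ≤ v i ^ α / (∑ j ∈ A, v j ^ α) := by
      generalize v i ^ α / (∑ j ∈ A, v j ^ α) = q at *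
      have : (0:ℝ) < α := by linarith
      have h3 : α * (1 - 1/α) = α - 1 := by field_simp
      by_contra hcon
      push Not at hcon
      nlinarith
    rw [mul_div_assoc, mul_comm]
    exact mul_le_mul_of_nonneg_left h2 (hp0 A)

/-- The vector field restricted to a face. -/
def faceF (α : ℝ) (p : Finset (Fin n) → ℝ) (S : Finset (Fin n)) (v : Fin n → ℝ) (i : Fin n) : ℝ :=
  if i ∈ S then -v i + ∑ A ∈ Finset.univ.filter (fun A : Finset (Fin n) => i ∈ A),
      p A * v i ^ α / (∑ j ∈ A ∩ S, v j ^ α) else -v i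

lemma faceT_pos {S A : Finset (Fin n)} {i : Fin n} (hi : i ∈ S) (hiA : i ∈ A) (hS : ∀ i ∈ S, 0 < v i) :
    0 < ∑ j ∈ A ∩ S, v j ^ α :=
  Finset.sum_pos (fun j hj => Real.rpow_pos_of_pos (hS j (Finset.mem_inter.1 hj).2) _)
    ⟨i, Finset.mem_inter.2 ⟨hiA, hi⟩⟩

lemma sum_face {S A : Finset (Fin n)} (g : Fin n → ℝ) (h : ∀ i ∉ S, g i = 0) :
    ∑ j ∈ A, g j = ∑ j ∈ A ∩ S, g j := by
  symm
  refine Finset.sum_subset Finset.inter_subset_left fun j hj hj' => h j fun hS => hj' ?_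
  exact Finset.mem_inter.2 ⟨hj, hS⟩

lemma coord_analytic (i : Fin n) (w : Fin n → ℝ) : AnalyticAt ℝ (fun v : Fin n → ℝ => v i) w :=
  ContinuousLinearMap.analyticAt (ContinuousLinearMap.proj (R := ℝ) (φ := fun _ : Fin n => ℝ) i) _

lemma coord_rpow (i : Fin n) (w : Fin n → ℝ) (h : 0 < w i) :
    AnalyticAt ℝ (fun v : Fin n → ℝ => v i ^ α) w := by
  have h1 : AnalyticAt ℝ (fun v : Fin n → ℝ => Real.exp (Real.log (v i) * α)) w :=
    AnalyticAt.fun_comp (g := Real.exp) (f := fun v : Fin n → ℝ => Real.log (v i) * α) analyticAt_rexp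
      (AnalyticAt.mul (AnalyticAt.fun_comp (g := Real.log) (f := fun v : Fin n → ℝ => v i)
        (analyticAt_log h) (coord_analytic i w)) analyticAt_const)
  refine h1.congr ?_
  have h2 : ∀ᶠ v : Fin n → ℝ in 𝓝 w, 0 < v i :=
    ((continuous_apply i).tendsto w).eventually (lt_mem_nhds h)
  filter_upwards [h2] with v hv
  exact (Real.rpow_def_of_pos hv α).symm

lemma faceF_analytic {S : Finset (Fin n)} {w : Fin n → ℝ} (hS : ∀ i ∈ S, 0 < w i) :
    AnalyticAt ℝ (faceF α p S) w := by
  rw [analyticAt_pi_iff]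
  intro i
  unfold faceF
  by_cases hi : i ∈ S
  · simp only [hi, if_true]
    refine (coord_analytic i w).neg.add ?_
    refine Finset.analyticAt_fun_sum _ fun A hA => ?_
    refine AnalyticAt.div (analyticAt_const.mul (coord_rpow i w (hS i hi))) ?_ ?_
    · refine Finset.analyticAt_fun_sum _ fun j hj => ?_
      exact coord_rpow j w (hS j (Finset.mem_inter.1 hj).2)
    · exact (faceT_pos hi (by simpa using hA) hS).ne'
  · simp only [hi, if_false]
    exact (coord_analytic i w).neg

lemma faceF_eq (hα : 1 < α) {S : Finset (Fin n)} (h0 : ∀ i ∉ S, v i = 0) (i : Fin n)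
    (hF : warmF α p v i = 0) : faceF α p S v i = 0 := by
  unfold faceF
  split_ifs with hi
  · rw [← hF]
    unfold warmF
    congr 1
    refine Finset.sum_congr rfl fun A _ => ?_
    rw [sum_face (S := S) (A := A) (fun j => v j ^ α)]
    intro j hj
    simp only [h0 j hj]
    exact Real.zero_rpow (by linarith)
  · simp [h0 i hi]

lemma warmD_row {S : Finset (Fin n)} {i : Fin n} (hi : i ∈ S) (k : Fin n) (hα : 1 < α)
    (hS : ∀ i ∈ S, 0 < v i) (h0 : ∀ i ∉ S, v i = 0) :
    warmD α p v i k = (if k = i then -1 else 0) +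
      ∑ A ∈ Finset.univ.filter (fun A : Finset (Fin n) => i ∈ A),
        (p A * (α * v i ^ (α-1)) / (∑ j ∈ A ∩ S, v j ^ α) * (if k = i then 1 else 0)
        - p A * v i ^ α / (∑ j ∈ A ∩ S, v j ^ α) ^ 2 * (if k ∈ A then α * v k ^ (α-1) else 0)) := by
  have hT : ∀ A : Finset (Fin n), ∑ j ∈ A, v j ^ α = ∑ j ∈ A ∩ S, v j ^ α := by
    intro A
    refine sum_face _ fun j hj => ?_
    rw [h0 j hj]
    exact Real.zero_rpow (by linarith)
  simp only [warmD, Matrix.of_apply]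
  by_cases hik : i = k
  · subst hik
    simp only [if_true]
    congr 1
    rw [Finset.mul_sum]
    refine Finset.sum_congr rfl fun A hA => ?_
    have hA : i ∈ A := by simpa using hA
    have := (faceT_pos (α := α) hi hA hS).ne'
    simp only [hA, if_true]
    rw [hT A]
    field_simp
  · simp only [if_neg hik, if_neg (Ne.symm hik), mul_zero, zero_sub, zero_add]
    rw [Finset.sum_neg_distrib]
    congr 1
    rw [Finset.mul_sum, ← Finset.filter_filter, Finset.sum_filter]
    refine Finset.sum_congr rfl fun A hA => ?_
    rw [hT A]
    split_ifs
    · ring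
    · ring

lemma faceF_fderiv (hα : 1 < α) {S : Finset (Fin n)} (hS : ∀ i ∈ S, 0 < v i) (h0 : ∀ i ∉ S, v i = 0) :
    HasFDerivAt (faceF α p S) (LinearMap.toContinuousLinearMap (Matrix.toLin' (warmD α p v))) v := by
  have a0 : α ≠ 0 := by linarith
  have a1 : α - 1 ≠ 0 := by linarith
  rw [hasFDerivAt_pi']
  intro i
  let π : Fin n → ((Fin n → ℝ) →L[ℝ] ℝ) := fun i => ContinuousLinearMap.proj (R := ℝ) (φ := fun _ : Fin n => ℝ) i
  have hπ : ∀ j, HasFDerivAt (fun v : Fin n → ℝ => v j) (π j) v := fun j => (π j).hasFDerivAt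
  by_cases hi : i ∈ S
  · have hr : ∀ j ∈ S, HasFDerivAt (fun v : Fin n → ℝ => v j ^ α) ((α * v j ^ (α-1)) • π j) v := by
      intro j hj
      exact (hπ j).rpow_const (Or.inl (hS j hj).ne')
    have hmain : HasFDerivAt (fun v => faceF α p S v i) (- π i +
      ∑ A ∈ Finset.univ.filter (fun A : Finset (Fin n) => i ∈ A),
        ((p A * (α * v i ^ (α-1)) / (∑ j ∈ A ∩ S, v j ^ α)) • π i
        - (p A * v i ^ α / (∑ j ∈ A ∩ S, v j ^ α) ^ 2) • ∑ j ∈ A ∩ S, (α * v j ^ (α-1)) • π j)) v := by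
      simp only [faceF, hi, if_true]
      refine (hπ i).neg.add ?_
      refine HasFDerivAt.fun_sum fun A hA => ?_
      have hA : i ∈ A := by simpa using hA
      have hne := (faceT_pos (α := α) hi hA hS).ne'
      have hden : HasFDerivAt (fun v : Fin n → ℝ => ∑ j ∈ A ∩ S, v j ^ α)
          (∑ j ∈ A ∩ S, (α * v j ^ (α-1)) • π j) v :=
        HasFDerivAt.fun_sum fun j hj => hr j (Finset.mem_inter.1 hj).2
      have hinv := (hasDerivAt_inv hne).comp_hasFDerivAt v hden
      have := ((hr i hi).const_mul (p A)).mul hinv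
      refine (this.congr_fderiv ?_).congr_of_eventuallyEq (Eventually.of_forall fun x => ?_)
      · ext h
        simp only [add_apply, smul_apply, sub_apply, smul_eq_mul, Function.comp]
        field_simp
        ring
      · simp [div_eq_mul_inv]
    refine hmain.congr_fderiv ?_
    ext h
    simp only [add_apply, neg_apply, _root_.sum_apply, sub_apply, smul_apply, smul_eq_mul,
      ContinuousLinearMap.comp_apply, LinearMap.coe_toContinuousLinearMap', Matrix.toLin'_apply,
      ContinuousLinearMap.proj_apply, Matrix.mulVec, dotProduct, π]
    simp only [warmD_row hi _ hα hS h0, add_mul, Finset.sum_add_distrib, ite_mul, zero_mul, Finset.sum_ite_eq',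
      Finset.mem_univ, if_true, Finset.sum_mul]
    rw [Finset.sum_comm]
    congr 1
    · simp
    · refine Finset.sum_congr rfl fun A hA => ?_
      simp only [sub_mul, Finset.sum_sub_distrib, mul_assoc, ite_mul, zero_mul, one_mul, ← Finset.mul_sum,
        Finset.sum_ite_eq', Finset.mem_univ, if_true]
      congr 2
      rw [Finset.sum_ite_mem, Finset.univ_inter, ← Finset.mul_sum, sum_face (S := S) (A := A)]
      intro j hj
      rw [h0 j hj, Real.zero_rpow a1]; simp
  · have hmain : HasFDerivAt (fun v => faceF α p S v i) (- π i) v := by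
      simp only [faceF, hi, if_false]
      exact (hπ i).neg
    refine hmain.congr_fderiv ?_
    ext h
    simp only [neg_apply, ContinuousLinearMap.comp_apply, LinearMap.coe_toContinuousLinearMap', Matrix.toLin'_apply,
      ContinuousLinearMap.proj_apply, Matrix.mulVec, dotProduct, π]
    rw [Finset.sum_eq_single i]
    · simp [warmD, h0 i hi, Real.zero_rpow a1]
    · intro k _ hk
      simp [warmD, h0 i hi, Real.zero_rpow a0, Ne.symm hk]
    · simp

theorem stable_finite (hα : 1 < α) (hp : IsWarmWeight p) :
    {v : Fin n → ℝ |
      InSimplex v ∧ (∀ i, warmF α p v i = 0) ∧ LinStable (warmD α p v)}.Finite := by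
  by_contra hinf
  have hinf : Set.Infinite {v : Fin n → ℝ |
      InSimplex v ∧ (∀ i, warmF α p v i = 0) ∧ LinStable (warmD α p v)} := hinf
  set St := {v : Fin n → ℝ |
      InSimplex v ∧ (∀ i, warmF α p v i = 0) ∧ LinStable (warmD α p v)} with hSt
  have hc : 0 < 1 - 1/α := by
    have : 1/α < 1 := by rw [div_lt_one (by linarith)]; exact hα
    linarith
  obtain ⟨κ, hκ, hκv⟩ : ∃ κ > 0, ∀ v ∈ St, ∀ i, 0 < v i → κ ≤ v i := by
    have hne : (Finset.univ.filter (fun A : Finset (Fin n) => 0 < p A)).Nonempty := by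
      by_contra hcon
      rw [Finset.not_nonempty_iff_eq_empty, Finset.filter_eq_empty_iff] at hcon
      have : ∑ A : Finset (Fin n), p A ≤ 0 :=
        Finset.sum_nonpos fun A _ => not_lt.1 (hcon (Finset.mem_univ A))
      rw [hp.2.2] at this
      linarith
    obtain ⟨A0, hA0, hmin⟩ := Finset.exists_min_image _ p hne
    refine ⟨(1 - 1/α) * p A0, mul_pos hc (by simpa using hA0), ?_⟩
    rintro v ⟨h1, h2, h3⟩ i hi
    obtain ⟨A, hA, hle⟩ := warm_lower hα (fun A => (hp.2.1 A).1) h1.1 h2 h3 i hi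
    refine le_trans ?_ hle
    exact mul_le_mul_of_nonneg_left (hmin A (by simpa using hA)) hc.le
  have hK : IsCompact (Set.univ.pi fun _ : Fin n => Set.Icc (0:ℝ) 1) :=
    isCompact_univ_pi fun _ => isCompact_Icc
  have hsub : St ⊆ Set.univ.pi fun _ : Fin n => Set.Icc (0:ℝ) 1 := by
    rintro v ⟨h1, -, -⟩ i -
    refine ⟨h1.1 i, ?_⟩
    rw [← h1.2]
    exact Finset.single_le_sum (fun j _ => h1.1 j) (Finset.mem_univ i)
  obtain ⟨w, hwK, hacc⟩ := hinf.exists_accPt_of_subset_isCompact hK hsub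
  let S := Finset.univ.filter fun i => 0 < w i
  have hwS : ∀ i ∈ S, 0 < w i := fun i hi => by simpa [S] using hi
  have hw0 : ∀ i ∉ S, w i = 0 := fun i hi =>
    le_antisymm (by simpa [S] using hi) (hwK i (Set.mem_univ i)).1
  let Z := {v | v ∈ St ∧ (∀ i ∈ S, 0 < v i) ∧ ∀ i ∉ S, v i = 0}
  refine no_acc (faceF α p S) w (faceF_analytic hwS) Z ?_ ?_
  · rw [accPt_iff_frequently] at hacc ⊢
    have hcont : ∀ i, Tendsto (fun v : Fin n → ℝ => v i) (𝓝 w) (𝓝 (w i)) := fun i =>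
      (continuous_apply i).tendsto w
    have e1 : ∀ᶠ v in 𝓝 w, ∀ i ∈ S, 0 < v i :=
      (Finset.eventually_all S).2 fun i hi => (hcont i).eventually (lt_mem_nhds (hwS i hi))
    have e2 : ∀ᶠ v in 𝓝 w, ∀ i, v i < w i + κ :=
      eventually_all.2 fun i => (hcont i).eventually (gt_mem_nhds (by linarith))
    refine (hacc.and_eventually (e1.and e2)).mono ?_
    rintro v ⟨⟨h1, h2⟩, h3, h4⟩
    refine ⟨h1, h2, h3, fun i hi => ?_⟩
    by_contra hvi
    have hpos : 0 < v i := lt_of_le_of_ne (h2.1.1 i) (Ne.symm hvi)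
    have := hκv v h2 i hpos
    have h5 := h4 i
    rw [hw0 i hi] at h5
    linarith
  · rintro v ⟨⟨h1, h2, h3⟩, h4, h5⟩
    refine ⟨funext fun i => faceF_eq hα h5 i (h2 i), ?_⟩
    rw [(faceF_fderiv hα h4 h5).fderiv]
    have : Function.Injective (warmD α p v).mulVec := by
      rw [Matrix.mulVec_injective_iff_isUnit, Matrix.isUnit_iff_isUnit_det]
      exact (linStable_det_ne _ h3).isUnit
    exact this

end TE

end Aux

/-- **Theorem (finitely many stable equilibria).** For every `n ≥ 1`, `α > 1`, and every
WARM weight `p` on `[n]`, the set of linearly stable equilibria is finite. -/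
theorem finitely_many_stable_equilibria (n : ℕ) (hn : 1 ≤ n) (α : ℝ) (hα : 1 < α)
    (p : Finset (Fin n) → ℝ) (hp : IsWarmWeight p) :
    {v : Fin n → ℝ |
      InSimplex v ∧ (∀ i, warmF α p v i = 0) ∧ LinStable (warmD α p v)}.Finite := by
  exact stable_finite hα hp

end
end
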